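/- Let d > 1, n₁ > 1 and n₂ > 1 be positive integers, let a_{11}, a_{12}, a_{21}, a_{22} be holomorphic function germs at the origin of ℂ², and let f = (f₁,f₂) ∈ 𝒪(ℂ²,0,0) be given by f₁(x₁,x₂) = x₁^{dn₁+1}a_{11}(x₁,x₂) + x₁^{n₁+1}x₂^{n₂}·O(1) + x₁x₂^{dn₂}·O(1) + x₂^{2dn₂+1}a_{12}(x₁,x₂) and f₂(x₁,x₂) = x₁^{dn₁}x₂·O(1) + x₁^{n₁}x₂^{n₂+1}·O(1) + x₂^{dn₂+1}a_{22}(x₁,x₂) + x₁^{2dn₁+1}a_{21}(x₁,x₂). If the origin is an isolated zero of f, then π_f(0) ≥ 2dn₁n₂ + dn₁ + dn₂ + 1. -/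

import Mathlib

open Metric Set Filter Topology Polynomial Asymptotics
open scoped Classical

noncomputable section

namespace ZhangPaper

/-- `ℂⁿ`. -/
abbrev Cn (n : ℕ) := Fin n → ℂ

variable {n : ℕ}

/-- A germ in `𝒪(ℂⁿ,0,0)`: holomorphic near `0` and fixing the origin. -/
def IsGerm (f : Cn n → Cn n) : Prop := AnalyticAt ℂ f 0 ∧ f 0 = 0

/-- `q` is a regular value of `h` on `s`. -/
def IsRegularValueOn (h : Cn n → Cn n) (s : Set (Cn n)) (q : Cn n) : Prop :=
  ∀ x ∈ s, h x = q → Function.Bijective (fderiv ℂ h x)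

/-- `m` is the zero order (multiplicity) of `h` at the isolated zero `p`:
the number of solutions of `h x = q` near `p`, for any regular value `q`
with `‖q‖` sufficiently small. -/
def HasZeroOrder (h : Cn n → Cn n) (p : Cn n) (m : ℕ) : Prop :=
  ∃ r > 0, AnalyticOnNhd ℂ h (closedBall p r) ∧ h p = 0 ∧
    (∀ x ∈ closedBall p r, h x = 0 → x = p) ∧
    (∀ ε > 0, ∃ q : Cn n, ‖q‖ < ε ∧ IsRegularValueOn h (ball p r) q) ∧
    ∃ δ > 0, ∀ q : Cn n, ‖q‖ < δ → IsRegularValueOn h (ball p r) q →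
      {x ∈ ball p r | h x = q}.ncard = m

/-- The zero order `π_h(p)` of `h` at `p`. -/
def zeroOrder (h : Cn n → Cn n) (p : Cn n) : ℕ := sInf {m | HasZeroOrder h p m}

/-- The fixed point index `μ_g(p)` of `g` at `p`. -/
def fixedPointIndex (g : Cn n → Cn n) (p : Cn n) : ℕ :=
  zeroOrder (fun x => x - g x) p

/-- The local Dold index `P_M(f,0)`. -/
def doldIndex (f : Cn n → Cn n) (M : ℕ) : ℤ :=
  ∑ τ ∈ M.primeFactors.powerset,
    (-1 : ℤ) ^ τ.card * (fixedPointIndex (f^[M / (∏ p ∈ τ, p)]) 0 : ℤ)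

/-- `x` is a periodic point of exact period `M` for `g`. -/
def ExactPeriodicPt (g : Cn n → Cn n) (M : ℕ) (x : Cn n) : Prop :=
  g^[M] x = x ∧ ∀ j, 0 < j → j < M → g^[j] x ≠ x

/-- `g` has at least `m` distinct periodic orbits of period `M` inside `B`. -/
def AtLeastOrbits (g : Cn n → Cn n) (M m : ℕ) (B : Set (Cn n)) : Prop :=
  ∃ p : Fin m → Cn n,
    (∀ i, ExactPeriodicPt g M (p i) ∧ ∀ j < M, g^[j] (p i) ∈ B) ∧
    ∀ i j : Fin m, i ≠ j → ∀ l < M, g^[l] (p i) ≠ p j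

/-- `g` has exactly `m` distinct periodic orbits of period `M` inside `B`. -/
def ExactlyOrbits (g : Cn n → Cn n) (M m : ℕ) (B : Set (Cn n)) : Prop :=
  AtLeastOrbits g M m B ∧ ¬ AtLeastOrbits g M (m + 1) B

/-- The number `𝒪_M(f,0)` of periodic orbits of period `M` of `f` hidden at the
fixed point `0`: the largest `m` such that there is a ball `B` centered at `0` in which
`0` is the only fixed point of `f^M`, and a sequence of holomorphic maps fixing `0`
converging to `f` uniformly on `B`, each having `m` distinct periodic orbits of
period `M` in `B`. -/
def hiddenOrbits (f : Cn n → Cn n) (M : ℕ) : ℕ :=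
  sSup {m | ∃ r > 0,
    (∀ x ∈ closedBall (0 : Cn n) r, f^[M] x = x → x = 0) ∧
    ∃ fk : ℕ → Cn n → Cn n,
      (∀ k, AnalyticOnNhd ℂ (fk k) (ball (0 : Cn n) r) ∧ fk k 0 = 0) ∧
      TendstoUniformlyOn fk f atTop (ball (0 : Cn n) r) ∧
      ∀ k, AtLeastOrbits (fk k) M m (ball (0 : Cn n) r)}

/-- `0` is an isolated fixed point of `g`. -/
def IsolatedFixedPtAt0 (g : Cn n → Cn n) : Prop :=
  g 0 = 0 ∧ ∀ᶠ x in 𝓝[≠] (0 : Cn n), g x ≠ x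

/-- `0` is an isolated zero of `h`. -/
def IsolatedZeroAt0 (h : Cn n → Cn n) : Prop :=
  h 0 = 0 ∧ ∀ᶠ x in 𝓝[≠] (0 : Cn n), h x ≠ 0

/-- `p` is a simple fixed point of `g`: `Dg(p)` has no eigenvalue `1`. -/
def SimpleFixedPt (g : Cn n → Cn n) (p : Cn n) : Prop :=
  g p = p ∧ ¬ Module.End.HasEigenvalue ((fderiv ℂ g p).toLinearMap) 1

/-- The global fixed point index `L(g)` of `g` over `U`: the sum of the fixed point
indices at all fixed points of `g` in `U`. -/
def globalIndex (g : Cn n → Cn n) (U : Set (Cn n)) : ℤ :=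
  ∑ᶠ p ∈ {x ∈ U | g x = x}, (fixedPointIndex g p : ℤ)

/-- The global Dold index `P_M(f)` over `U`. -/
def globalDold (f : Cn n → Cn n) (M : ℕ) (U : Set (Cn n)) : ℤ :=
  ∑ τ ∈ M.primeFactors.powerset,
    (-1 : ℤ) ^ τ.card * globalIndex (f^[M / (∏ p ∈ τ, p)]) U

/-!
The zero order of `f` at `0` is the degree of the underlying real map, computed by Heinz's integral
`∫ φ (f x) * det (Df x)`, which is invariant under small perturbations of `f`. Holomorphic maps have
nonnegative real Jacobian, so every nondegenerate solution of `g x = q`, for `g` close to `f` and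
`q` small, counts positively: it suffices to find many of them for a single such `g`.

Let `g` be the normal form with slightly perturbed, generic coefficients, and `q = ε • e₁`. On each
edge of the Newton diagram, a weighted dilation turns `g x = ε • e₁` into an analytic deformation of
a quasi-homogeneous system, and the implicit function theorem continues each solution of that system
to a branch of nondegenerate solutions with coordinates `x i ∼ z i * ε ^ s i`. Branches with
distinct leading terms are distinct. The steepest edge yields `d * n₁ + 1` of them, the remaining
two `2 * d * n₁ * n₂ + d * n₂`; these two merge for `d = 2`, where they become a single edge whose
polynomial has two simple roots.
-/

open MeasureTheory

section Piola

theorem sum_eq_zero_of_antisymm {ι : Type*} [Fintype ι] {T : ι → ι → ℝ}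
    (hT : ∀ i j, T i j = -T j i) : ∑ i, ∑ j, T i j = 0 := by
  have : ∑ i, ∑ j, T i j = -∑ i, ∑ j, T i j := by
    conv_lhs => rw [Finset.sum_comm]
    simp only [← Finset.sum_neg_distrib, ← hT]
  linarith

variable {ι E F : Type*} [DecidableEq ι] [NormedAddCommGroup E] [NormedSpace ℝ E]
  [NormedAddCommGroup F] [NormedSpace ℝ F]

/-- The coefficient along `v i` of the vector field `g` pulled back by `h`, with respect to the
alternating form `ω`. When `ω` is the determinant in a basis `v`, it is the `i`-th entry of the
adjugate of `fderiv ℝ h x` applied to `g x`. -/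
def flux (ω : F [⋀^ι]→L[ℝ] ℝ) (v : ι → E) (h g : E → F) (i : ι) (x : E) : ℝ :=
  ω (Function.update (fun j => fderiv ℝ h x (v j)) i (g x))

theorem map_update_update_swap (ω : F [⋀^ι]→L[ℝ] ℝ) (a : ι → F) {i j : ι} (hij : i ≠ j) (y z : F) :
    ω (Function.update (Function.update a i y) j z) =
      -ω (Function.update (Function.update a j y) i z) := by
  rw [← ContinuousAlternatingMap.coe_toAlternatingMap,
    ← AlternatingMap.map_swap _ (Function.update (Function.update a j y) i z) hij,
    Equiv.comp_swap_eq_update]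
  simp [hij.symm, Function.update_comm hij.symm]

theorem hasFDerivAt_fderiv_apply {h : E → F} {x : E} (hh : ContDiffAt ℝ 2 h x) (u : E) :
    HasFDerivAt (fun y => fderiv ℝ h y u) ((fderiv ℝ (fderiv ℝ h) x).flip u) x := by
  have h1 : DifferentiableAt ℝ (fderiv ℝ h) x :=
    (hh.fderiv_right (m := 1) (by norm_num)).differentiableAt (by norm_num)
  exact (h1.hasFDerivAt.clm_apply (hasFDerivAt_const u x)).congr_fderiv (by ext; simp)

variable [Fintype ι] {ω : F [⋀^ι]→L[ℝ] ℝ} {v : ι → E} {h g : E → F} {x : E}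

theorem hasFDerivAt_flux (hh : ContDiffAt ℝ 2 h x) (hg : DifferentiableAt ℝ g x) (i : ι) :
    HasFDerivAt (flux ω v h g i)
      (∑ j, (ω.toContinuousLinearMap
          (Function.update (fun j => fderiv ℝ h x (v j)) i (g x)) j).comp
        (Function.update (fun j => (fderiv ℝ (fderiv ℝ h) x).flip (v j)) i (fderiv ℝ g x) j))
      x := by
  have hcol (j : ι) : HasFDerivAt (fun y => Function.update (fun j => fderiv ℝ h y (v j)) i (g y) j)
      (Function.update (fun j => (fderiv ℝ (fderiv ℝ h) x).flip (v j)) i (fderiv ℝ g x) j) x := by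
    rcases eq_or_ne j i with rfl | hj
    · simpa only [Function.update_self] using hg.hasFDerivAt
    · simpa only [Function.update_of_ne hj] using hasFDerivAt_fderiv_apply hh (v j)
  exact ((hasFDerivAt_const ω x).continuousAlternatingMap_apply hcol).congr_fderiv (by ext; simp)

theorem sum_fderiv_flux (hh : ContDiffAt ℝ 2 h x) (hg : DifferentiableAt ℝ g x) :
    ∑ i, fderiv ℝ (flux ω v h g i) x (v i) =
      ∑ i, ω (Function.update (fun j => fderiv ℝ h x (v j)) i (fderiv ℝ g x (v i))) := by
  set a : ι → F := fun j => fderiv ℝ h x (v j)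
  set T : ι → ι → ℝ := fun i j => if i = j then 0 else
    ω (Function.update (Function.update a i (g x)) j (fderiv ℝ (fderiv ℝ h) x (v i) (v j))) with hT
  have hsymm := hh.isSymmSndFDerivAt (by simp)
  have hanti (i j : ι) : T i j = -T j i := by
    rcases eq_or_ne i j with rfl | hij
    · simp [hT]
    · simp only [hT, if_neg hij, if_neg hij.symm]
      rw [map_update_update_swap ω a hij, hsymm.eq]
  rw [← add_zero (∑ i, ω _), ← sum_eq_zero_of_antisymm hanti, ← Finset.sum_add_distrib]
  refine Finset.sum_congr rfl fun i _ => ?_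
  rw [(hasFDerivAt_flux hh hg i).fderiv, sum_apply,
    ← Finset.add_sum_erase _ _ (Finset.mem_univ i),
    ← Finset.add_sum_erase _ (T i) (Finset.mem_univ i)]
  have hTi : T i i = 0 := if_pos rfl
  rw [hTi, zero_add]
  congr 1
  · simp [a]
  · refine Finset.sum_congr rfl fun j hj => ?_
    have hij := Finset.ne_of_mem_erase hj
    simp [hT, hij, hij.symm, a]

/-- The determinant in the basis `b`, as a continuous alternating form. -/
def detForm (b : Module.Basis ι ℝ F) : F [⋀^ι]→L[ℝ] ℝ where
  __ := b.det
  cont := by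
    have := b.finiteDimensional_of_finite
    change Continuous fun w => b.det w
    simp only [Module.Basis.det_apply]
    exact Continuous.matrix_det (continuous_matrix fun i j =>
      (b.coord i).continuous_of_finiteDimensional.comp (continuous_apply j))

theorem sum_detForm_update_smul (b : Module.Basis ι ℝ F) (w : ι → F) (y : F) :
    ∑ i, detForm b (Function.update w i y) • w i = detForm b w • y := by
  change ∑ i, b.det (Function.update w i y) • w i = b.det w • y
  have hcramer := Matrix.mulVec_cramer (b.toMatrix w) (b.repr y)
  apply b.repr.injective
  ext k
  have := congrFun hcramer k
  simp only [Matrix.mulVec, dotProduct, Matrix.cramer_apply, ← Module.Basis.toMatrix_update,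
    ← Module.Basis.det_apply, Module.Basis.toMatrix_apply] at this
  simpa [mul_comm] using this

theorem sum_fderiv_mul_flux {φ : F → ℝ} {b : Module.Basis ι ℝ F} {k g : F → F} {x : F}
    (hφ : DifferentiableAt ℝ φ (k x)) (hk : ContDiffAt ℝ 2 k x) (hg : DifferentiableAt ℝ g x) :
    ∑ i, fderiv ℝ (fun y => φ (k y) * flux (detForm b) b k g i y) x (b i) =
      fderiv ℝ φ (k x) (g x) * detForm b (fun j => fderiv ℝ k x (b j)) +
        φ (k x) * ∑ i, detForm b
          (Function.update (fun j => fderiv ℝ k x (b j)) i (fderiv ℝ g x (b i))) := by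
  have hterm (i : ι) : fderiv ℝ (fun y => φ (k y) * flux (detForm b) b k g i y) x (b i) =
      fderiv ℝ φ (k x) (flux (detForm b) b k g i x • fderiv ℝ k x (b i)) +
        φ (k x) * fderiv ℝ (flux (detForm b) b k g i) x (b i) := by
    have hφk : HasFDerivAt (fun y => φ (k y)) ((fderiv ℝ φ (k x)).comp (fderiv ℝ k x)) x :=
      hφ.hasFDerivAt.comp x (hk.differentiableAt (by norm_num)).hasFDerivAt
    rw [(hφk.fun_mul (hasFDerivAt_flux hk hg i).differentiableAt.hasFDerivAt).fderiv]
    simp [add_comm]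
  simp only [hterm, Finset.sum_add_distrib, ← map_sum, ← Finset.mul_sum, sum_fderiv_flux hk hg]
  simp only [flux, sum_detForm_update_smul, map_smul, smul_eq_mul, mul_comm]

theorem hasDerivAt_mul_detForm {φ : F → ℝ} {b : Module.Basis ι ℝ F} {h g : F → F} {x : F} (t : ℝ)
    (hφ : DifferentiableAt ℝ φ (h x + t • g x)) (hh : ContDiffAt ℝ 2 h x)
    (hg : ContDiffAt ℝ 2 g x) :
    HasDerivAt
      (fun s : ℝ => φ (h x + s • g x) *
        detForm b (fun j => fderiv ℝ h x (b j) + s • fderiv ℝ g x (b j)))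
      (∑ i, fderiv ℝ (fun y => φ (h y + t • g y) *
        flux (detForm b) b (fun y => h y + t • g y) g i y) x (b i)) t := by
  have hk : fderiv ℝ (fun y => h y + t • g y) x = fderiv ℝ h x + t • fderiv ℝ g x :=
    ((hh.differentiableAt (by norm_num)).hasFDerivAt.add
      ((hg.differentiableAt (by norm_num)).hasFDerivAt.const_smul t)).fderiv
  have hline (y z : F) : HasDerivAt (fun s : ℝ => y + s • z) z t := by
    simpa using ((hasDerivAt_id t).smul_const z).const_add y
  have hdet := ((detForm b).hasFDerivAt
    (fun j => fderiv ℝ h x (b j) + t • fderiv ℝ g x (b j))).comp_hasDerivAt t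
    (hasDerivAt_pi.2 fun j => hline (fderiv ℝ h x (b j)) (fderiv ℝ g x (b j)))
  have hφt := hφ.hasFDerivAt.comp_hasDerivAt t (hline (h x) (g x))
  rw [sum_fderiv_mul_flux (k := fun y => h y + t • g y) hφ (hh.add (hg.const_smul t))
    (hg.differentiableAt (by norm_num)), hk]
  exact (hφt.mul hdet).congr_deriv (by simp)

theorem detForm_comp_basis (b : Module.Basis ι ℝ F)
    (L : F →L[ℝ] F) : detForm b (fun j => L (b j)) = L.det :=
  (b.det_comp (L : F →ₗ[ℝ] F) b).trans (by rw [b.det_self, mul_one])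

theorem contDiffAt_homotopy_density {φ : F → ℝ} {h g : F → F} {x : F} (b : Module.Basis ι ℝ F)
    (hφ : ContDiff ℝ 1 φ)
    (hh : ContDiffAt ℝ 2 h x) (hg : ContDiffAt ℝ 2 g x) (t : ℝ) :
    ContDiffAt ℝ 1 (fun p : ℝ × F => φ (h p.2 + p.1 • g p.2) *
      detForm b (fun j => fderiv ℝ h p.2 (b j) + p.1 • fderiv ℝ g p.2 (b j))) (t, x) := by
  have hsnd {k : F → F} (hk : ContDiffAt ℝ 2 k x) :
      ContDiffAt ℝ 1 (fun p : ℝ × F => k p.2) (t, x) ∧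
      ∀ j, ContDiffAt ℝ 1 (fun p : ℝ × F => fderiv ℝ k p.2 (b j)) (t, x) :=
    ⟨(hk.of_le one_le_two).comp (t, x) contDiffAt_snd, fun j =>
      ((hk.fderiv_right (m := 1) le_rfl).comp (t, x) contDiffAt_snd).clm_apply contDiffAt_const⟩
  refine (hφ.contDiffAt.comp (t, x) ((hsnd hh).1.add (contDiffAt_fst.smul (hsnd hg).1))).mul ?_
  exact (detForm b).toContinuousMultilinearMap.contDiff.contDiffAt.comp (t, x)
    (contDiffAt_pi.2 fun j => ((hsnd hh).2 j).add (contDiffAt_fst.smul ((hsnd hg).2 j)))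

end Piola

section HomotopyInvariance

theorem hasDerivAt_comp_prodMk_const {E : Type*} [NormedAddCommGroup E] [NormedSpace ℝ E]
    {F : ℝ × E → ℝ} {t : ℝ} {x : E} (hF : DifferentiableAt ℝ F (t, x)) :
    HasDerivAt (fun s => F (s, x)) (fderiv ℝ F (t, x) (1, 0)) t :=
  hF.hasFDerivAt.comp_hasDerivAt t ((hasDerivAt_id t).prodMk (hasDerivAt_const t x))

theorem continuousAt_det_fderiv {E : Type*} [NormedAddCommGroup E] [NormedSpace ℝ E]
    {h : E → E} {x : E} (hh : ContDiffAt ℝ 1 h x) :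
    ContinuousAt (fun y => (fderiv ℝ h y).det) x :=
  ContinuousLinearMap.continuous_det.continuousAt.comp
    (hh.fderiv_right (m := 0) le_rfl).continuousAt

theorem eventually_indicator_eq_zero {X M : Type*} [TopologicalSpace X] [Zero M] {U : Set X}
    (hU : IsOpen U) {G : X → M} (h0 : ∀ x ∈ frontier U, ∀ᶠ y in 𝓝 x, G y = 0) {x : X}
    (hx : x ∉ U) :
    U.indicator G =ᶠ[𝓝 x] fun _ => 0 := by
  by_cases hx' : x ∈ closure U
  · filter_upwards [h0 x (hU.frontier_eq ▸ ⟨hx', hx⟩)] with y hy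
    exact indicator_apply_eq_zero.2 fun _ => hy
  · filter_upwards [isClosed_closure.isOpen_compl.mem_nhds hx'] with y hy
    exact indicator_of_notMem (fun h => hy (subset_closure h)) G

variable {E : Type*} [NormedAddCommGroup E] [NormedSpace ℝ E] [FiniteDimensional ℝ E]
  [MeasurableSpace E] [BorelSpace E] {μ : Measure E} [μ.IsAddHaarMeasure] {U : Set E}

theorem integral_fderiv_apply_eq_zero {G : E → ℝ} (hG : ContDiff ℝ 1 G) (hc : HasCompactSupport G)
    (e : E) : ∫ x, fderiv ℝ G x e ∂μ = 0 := by
  have hcont : Continuous fun x => fderiv ℝ G x e :=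
    (hG.continuous_fderiv one_ne_zero).clm_apply continuous_const
  simpa using integral_mul_fderiv_eq_neg_fderiv_mul_of_integrable (μ := μ)
    (𝕜 := ℝ) (f := fun _ => (1 : ℝ)) (g := G) (v := e) (by simp)
    (by simpa using hcont.integrable_of_hasCompactSupport (hc.fderiv_apply ℝ e))
    (by simpa using hG.continuous.integrable_of_hasCompactSupport hc)
    (fun x _ => differentiableAt_const _) (fun x _ => (hG.differentiable one_ne_zero) x)

theorem setIntegral_fderiv_apply_eq_zero (hU : IsOpen U) (hUb : Bornology.IsBounded U) {G : E → ℝ}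
    (hG : ∀ x ∈ U, ContDiffAt ℝ 1 G x) (h0 : ∀ x ∈ frontier U, ∀ᶠ y in 𝓝 x, G y = 0) (e : E) :
    ∫ x in U, fderiv ℝ G x e ∂μ = 0 := by
  have hin (x : E) (hx : x ∈ U) : U.indicator G =ᶠ[𝓝 x] G :=
    (eqOn_indicator (f := G)).eventuallyEq_of_mem (hU.mem_nhds hx)
  have hsmooth : ContDiff ℝ 1 (U.indicator G) := contDiff_iff_contDiffAt.2 fun x => by
    by_cases hx : x ∈ U
    · exact (hG x hx).congr_of_eventuallyEq (hin x hx)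
    · exact contDiffAt_const.congr_of_eventuallyEq (eventually_indicator_eq_zero hU h0 hx)
  have hsupp : HasCompactSupport (U.indicator G) :=
    HasCompactSupport.intro hUb.isCompact_closure fun x hx =>
      indicator_of_notMem (fun h => hx (subset_closure h)) G
  calc ∫ x in U, fderiv ℝ G x e ∂μ = ∫ x in U, fderiv ℝ (U.indicator G) x e ∂μ :=
        setIntegral_congr_fun hU.measurableSet fun x hx => by simp only [(hin x hx).fderiv_eq]
    _ = ∫ x, fderiv ℝ (U.indicator G) x e ∂μ :=
        setIntegral_eq_integral_of_forall_compl_eq_zero fun x hx => by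
          rw [(eventually_indicator_eq_zero hU h0 hx).fderiv_eq, fderiv_fun_const]
          rfl
    _ = 0 := integral_fderiv_apply_eq_zero hsmooth hsupp e

theorem integrableOn_of_continuousAt (hUb : Bornology.IsBounded U) {G : E → ℝ}
    (hG : ∀ x ∈ closure U, ContinuousAt G x) : IntegrableOn G U μ :=
  ((continuousOn_of_forall_continuousAt hG).integrableOn_compact hUb.isCompact_closure).mono_set
    subset_closure

theorem hasDerivAt_setIntegral (hU : IsOpen U) (hUb : Bornology.IsBounded U)
    {F : ℝ × E → ℝ} (hF : ∀ t, ∀ x ∈ closure U, ContDiffAt ℝ 1 F (t, x)) (t : ℝ) :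
    HasDerivAt (fun s => ∫ x in U, F (s, x) ∂μ) (∫ x in U, fderiv ℝ F (t, x) (1, 0) ∂μ) t := by
  have hcont (s : ℝ) (x : E) (hx : x ∈ closure U) :
      ContinuousAt (fun p => fderiv ℝ F p (1, 0)) (s, x) :=
    ((hF s x hx).fderiv_right (m := 0) le_rfl).continuousAt.clm_apply continuousAt_const
  have hslice (s : ℝ) : IntegrableOn (fun x => F (s, x)) U μ :=
    integrableOn_of_continuousAt hUb fun x hx =>
      (hF s x hx).continuousAt.comp (by fun_prop)
  obtain ⟨C, hC⟩ := ((isCompact_Icc (a := t - 1) (b := t + 1)).prod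
    hUb.isCompact_closure).exists_bound_of_continuousOn
    (f := fun p => fderiv ℝ F p (1, 0)) fun p hp => (hcont p.1 p.2 hp.2).continuousWithinAt
  refine (hasDerivAt_integral_of_dominated_loc_of_deriv_le (s := Ioo (t - 1) (t + 1))
    (F := fun s x => F (s, x)) (F' := fun s x => fderiv ℝ F (s, x) (1, 0)) (bound := fun _ => C)
    (Ioo_mem_nhds (by linarith) (by linarith)) (.of_forall fun s => (hslice s).aestronglyMeasurable)
    (hslice t) ?_ ?_ ?_ ?_).2
  · exact (integrableOn_of_continuousAt hUb fun x hx =>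
      (hcont t x hx).comp (by fun_prop)).aestronglyMeasurable
  · filter_upwards [ae_restrict_mem hU.measurableSet] with x hx s hs
    exact hC (s, x) ⟨Ioo_subset_Icc_self hs, subset_closure hx⟩
  · exact integrableOn_of_continuousAt hUb fun _ _ => continuousAt_const
  · filter_upwards [ae_restrict_mem hU.measurableSet] with x hx s _
    exact hasDerivAt_comp_prodMk_const ((hF s x (subset_closure hx)).differentiableAt one_ne_zero)

variable {h g : E → E} {φ : E → ℝ}

theorem setIntegral_sum_fderiv_mul_flux_eq_zero {ι : Type*} [Fintype ι] [DecidableEq ι]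
    (b : Module.Basis ι ℝ E) (hU : IsOpen U) (hUb : Bornology.IsBounded U) (hφ : ContDiff ℝ 1 φ)
    (hh : ∀ x ∈ closure U, ContDiffAt ℝ 2 h x) (hg : ∀ x ∈ closure U, ContDiffAt ℝ 1 g x)
    (hφh : ∀ x ∈ frontier U, h x ∉ tsupport φ) :
    ∫ x in U, ∑ i, fderiv ℝ (fun y => φ (h y) * flux (detForm b) b h g i y) x (b i) ∂μ = 0 := by
  have hsmooth (i : ι) (x : E) (hx : x ∈ closure U) :
      ContDiffAt ℝ 1 (fun y => φ (h y) * flux (detForm b) b h g i y) x := by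
    refine (hφ.contDiffAt.comp x ((hh x hx).of_le one_le_two)).mul ?_
    refine (detForm b).toContinuousMultilinearMap.contDiff.contDiffAt.comp x
      (contDiffAt_pi.2 fun j => ?_)
    rcases eq_or_ne j i with rfl | hj
    · simpa only [Function.update_self] using hg x hx
    · simpa only [Function.update_of_ne hj] using
        ((hh x hx).fderiv_right (m := 1) le_rfl).clm_apply contDiffAt_const
  rw [integral_finsetSum _ fun i _ => integrableOn_of_continuousAt hUb fun x hx =>
    ((hsmooth i x hx).fderiv_right (m := 0) le_rfl).continuousAt.clm_apply continuousAt_const]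
  refine Finset.sum_eq_zero fun i _ => setIntegral_fderiv_apply_eq_zero hU hUb
    (fun x hx => hsmooth i x (subset_closure hx)) (fun x hx => ?_) (b i)
  have hφ0 := notMem_tsupport_iff_eventuallyEq.1 (hφh x hx)
  filter_upwards [(hh x (frontier_subset_closure hx)).continuousAt.eventually hφ0] with y hy
  simp only [hy, Pi.zero_apply, zero_mul]

/-- Along `h + t • g`, the integrand of Heinz's degree integral changes by the divergence of the
flux of `g`, which is supported away from the boundary. -/
theorem setIntegral_comp_mul_det_add (hU : IsOpen U) (hUb : Bornology.IsBounded U)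
    (hφ : ContDiff ℝ 1 φ) (hh : ∀ x ∈ closure U, ContDiffAt ℝ 2 h x)
    (hg : ∀ x ∈ closure U, ContDiffAt ℝ 2 g x)
    (hφh : ∀ t ∈ Icc (0 : ℝ) 1, ∀ x ∈ frontier U, h x + t • g x ∉ tsupport φ) :
    ∫ x in U, φ (h x + g x) * (fderiv ℝ (fun y => h y + g y) x).det ∂μ =
      ∫ x in U, φ (h x) * (fderiv ℝ h x).det ∂μ := by
  set b := Module.finBasis ℝ E
  set F : ℝ × E → ℝ := fun p => φ (h p.2 + p.1 • g p.2) *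
    detForm b (fun j => fderiv ℝ h p.2 (b j) + p.1 • fderiv ℝ g p.2 (b j)) with hF
  have hFs (t : ℝ) (x : E) (hx : x ∈ closure U) : ContDiffAt ℝ 1 F (t, x) :=
    contDiffAt_homotopy_density b hφ (hh x hx) (hg x hx) t
  have hderiv (t : ℝ) : HasDerivAt (fun s => ∫ x in U, F (s, x) ∂μ)
      (∫ x in U, fderiv ℝ F (t, x) (1, 0) ∂μ) t := hasDerivAt_setIntegral hU hUb hFs t
  have hzero (t : ℝ) (ht : t ∈ Icc (0 : ℝ) 1) : ∫ x in U, fderiv ℝ F (t, x) (1, 0) ∂μ = 0 := by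
    rw [← setIntegral_sum_fderiv_mul_flux_eq_zero (μ := μ) b hU hUb hφ
      (fun x hx => (hh x hx).add ((hg x hx).const_smul t))
      (fun x hx => (hg x hx).of_le one_le_two) (hφh t ht)]
    refine setIntegral_congr_fun hU.measurableSet fun x hx => ?_
    have hx' := subset_closure hx
    exact (hasDerivAt_comp_prodMk_const ((hFs t x hx').differentiableAt one_ne_zero)).unique
      (hasDerivAt_mul_detForm t (hφ.differentiable one_ne_zero _) (hh x hx') (hg x hx'))
  have hconst := constant_of_has_deriv_right_zero (a := 0) (b := 1)
    (fun t _ => (hderiv t).continuousAt.continuousWithinAt)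
    (fun t ht => (hzero t (Ico_subset_Icc_self ht) ▸ hderiv t).hasDerivWithinAt)
    1 (right_mem_Icc.2 zero_le_one)
  have hdiff {k : E → E} (hk : ∀ x ∈ closure U, ContDiffAt ℝ 2 k x) (x : E) (hx : x ∈ U) :
      DifferentiableAt ℝ k x := (hk x (subset_closure hx)).differentiableAt two_ne_zero
  calc _ = ∫ x in U, F (1, x) ∂μ := setIntegral_congr_fun hU.measurableSet fun x hx => by
        simp only [hF, one_smul, ← add_apply, detForm_comp_basis,
          fderiv_fun_add (hdiff hh x hx) (hdiff hg x hx)]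
    _ = ∫ x in U, F (0, x) ∂μ := hconst
    _ = _ := by simp only [hF, zero_smul, add_zero, detForm_comp_basis]

end HomotopyInvariance

section ZeroCount

theorem continuousAt_comp_mul_abs_det {E : Type*} [NormedAddCommGroup E] [NormedSpace ℝ E]
    {h : E → E} {φ : E → ℝ} (hφ : Continuous φ) {x : E}
    (hh : ContDiffAt ℝ 1 h x) : ContinuousAt (fun y => φ (h y) * |(fderiv ℝ h y).det|) x :=
  (hφ.continuousAt.comp hh.continuousAt).mul (continuousAt_det_fderiv hh).abs

variable {E : Type*} [NormedAddCommGroup E] [NormedSpace ℝ E] [FiniteDimensional ℝ E]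
  {U : Set E} {h : E → E}

theorem exists_isOpen_injOn_image_mem_nhds {z : E} (hh : ContDiffAt ℝ 1 h z)
    (hdet : (fderiv ℝ h z).det ≠ 0) (hU : U ∈ 𝓝 z) :
    ∃ W ⊆ U, IsOpen W ∧ z ∈ W ∧ InjOn h W ∧ h '' W ∈ 𝓝 (h z) := by
  have hstrict : HasStrictFDerivAt h
      ((fderiv ℝ h z).toContinuousLinearEquivOfDetNeZero hdet : E →L[ℝ] E) z := by
    rw [ContinuousLinearMap.coe_toContinuousLinearEquivOfDetNeZero]
    exact hh.hasStrictFDerivAt one_ne_zero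
  set T := hstrict.toOpenPartialHomeomorph h
  have hW : T.source ∩ interior U ∈ 𝓝 z := (T.open_source.inter isOpen_interior).mem_nhds
    ⟨hstrict.mem_toOpenPartialHomeomorph_source, mem_interior_iff_mem_nhds.2 hU⟩
  refine ⟨T.source ∩ interior U, inter_subset_right.trans interior_subset,
    T.open_source.inter isOpen_interior, mem_of_mem_nhds hW, T.injOn.mono inter_subset_left, ?_⟩
  rw [← hstrict.map_nhds_eq_of_equiv]
  exact image_mem_map hW

theorem finite_setOf_eq_zero (hUb : Bornology.IsBounded U)
    (hh : ∀ x ∈ closure U, ContDiffAt ℝ 1 h x)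
    (hreg : ∀ x ∈ closure U, h x = 0 → (fderiv ℝ h x).det ≠ 0) : {x ∈ U | h x = 0}.Finite := by
  by_contra hinf
  obtain ⟨x, hx, hacc⟩ := Set.Infinite.exists_accPt_of_subset_isCompact hinf
    hUb.isCompact_closure fun y hy => subset_closure hy.1
  refine accPt_iff_frequently_nhdsNE.1 hacc ?_
  by_cases h0 : h x = 0
  · obtain ⟨W, -, hWo, hxW, hWi, -⟩ :=
      exists_isOpen_injOn_image_mem_nhds (hh x hx) (hreg x hx h0) univ_mem
    filter_upwards [mem_nhdsWithin_of_mem_nhds (hWo.mem_nhds hxW), self_mem_nhdsWithin]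
      with y hyW hyx hy
    exact hyx (hWi hyW hxW (hy.2.trans h0.symm))
  · filter_upwards [mem_nhdsWithin_of_mem_nhds ((hh x hx).continuousAt.eventually_ne h0)]
      with y hy0 hy
    exact hy0 hy.2

variable [MeasurableSpace E] [BorelSpace E] {μ : Measure E} [μ.IsAddHaarMeasure]

theorem setIntegral_comp_mul_abs_det_of_injOn {W : Set E} (hW : MeasurableSet W)
    (hh : ∀ x ∈ W, DifferentiableAt ℝ h x) (hinj : InjOn h W) {φ : E → ℝ}
    (hφ : ∀ w ∉ h '' W, φ w = 0) :
    ∫ x in W, φ (h x) * |(fderiv ℝ h x).det| ∂μ = ∫ w, φ w ∂μ := by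
  rw [← setIntegral_eq_integral_of_forall_compl_eq_zero hφ,
    integral_image_eq_integral_abs_det_fderiv_smul μ hW
      (fun x hx => (hh x hx).hasFDerivAt.hasFDerivWithinAt) hinj]
  simp only [smul_eq_mul, mul_comm]

theorem exists_isOpen_setIntegral_comp_mul_abs_det (hU : IsOpen U) (hUb : Bornology.IsBounded U)
    (hh : ∀ x ∈ closure U, ContDiffAt ℝ 1 h x) {Z : Finset E} (hZU : ↑Z ⊆ U)
    (hZ : ∀ z ∈ Z, h z = 0 ∧ (fderiv ℝ h z).det ≠ 0) :
    ∃ V ⊆ U, IsOpen V ∧ ↑Z ⊆ V ∧ ∀ᶠ ε in 𝓝[>] (0 : ℝ), ∀ φ : E → ℝ, Continuous φ →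
      (∀ w, ε ≤ ‖w‖ → φ w = 0) →
      ∫ x in V, φ (h x) * |(fderiv ℝ h x).det| ∂μ = Z.card * ∫ w, φ w ∂μ := by
  obtain ⟨D, hD, hdisj⟩ := Z.finite_toSet.t2_separation
  have hloc (z : E) (hz : z ∈ Z) :
      ∃ W ⊆ D z ∩ U, IsOpen W ∧ z ∈ W ∧ InjOn h W ∧ h '' W ∈ 𝓝 (h z) :=
    exists_isOpen_injOn_image_mem_nhds (hh z (subset_closure (hZU hz))) (hZ z hz).2
      (((hD z).2.inter hU).mem_nhds ⟨(hD z).1, hZU hz⟩)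
  choose! W hWD hWo hzW hWi hWn using hloc
  have hsmall : ∀ᶠ ε in 𝓝[>] (0 : ℝ), ∀ z ∈ Z, ball 0 ε ⊆ h '' W z := by
    rw [Filter.eventually_all_finset]
    intro z hz
    obtain ⟨δ, hδ, hδW⟩ := Metric.mem_nhds_iff.1 ((hZ z hz).1 ▸ hWn z hz)
    filter_upwards [Ioo_mem_nhdsGT hδ] with ε hε
    exact (ball_subset_ball hε.2.le).trans hδW
  refine ⟨⋃ z ∈ Z, W z, iUnion₂_subset fun z hz => (hWD z hz).trans inter_subset_right,
    isOpen_biUnion hWo, fun z hz => mem_biUnion hz (hzW z hz), ?_⟩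
  filter_upwards [hsmall] with ε hε φ hφ hφ0
  have hint (z : E) (hz : z ∈ Z) :
      ∫ x in W z, φ (h x) * |(fderiv ℝ h x).det| ∂μ = ∫ w, φ w ∂μ :=
    setIntegral_comp_mul_abs_det_of_injOn (hWo z hz).measurableSet
      (fun x hx => (hh x (subset_closure (hWD z hz hx).2)).differentiableAt one_ne_zero) (hWi z hz)
      fun w hw => hφ0 w (not_lt.1 fun hlt => hw (hε z hz (mem_ball_zero_iff.2 hlt)))
  rw [integral_biUnion_finset Z (fun z hz => (hWo z hz).measurableSet)
    (fun a ha b hb hab => (hdisj ha hb hab).mono (fun x hx => (hWD a ha hx).1)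
      fun x hx => (hWD b hb hx).1)
    (fun z hz => (integrableOn_of_continuousAt hUb fun x hx =>
      continuousAt_comp_mul_abs_det hφ (hh x hx)).mono_set ((hWD z hz).trans inter_subset_right)),
    Finset.sum_congr rfl hint, Finset.sum_const, nsmul_eq_mul]

theorem card_mul_integral_le (hU : IsOpen U) (hUb : Bornology.IsBounded U)
    (hh : ∀ x ∈ closure U, ContDiffAt ℝ 1 h x) {Z : Finset E} (hZU : ↑Z ⊆ U)
    (hZ : ∀ z ∈ Z, h z = 0 ∧ (fderiv ℝ h z).det ≠ 0) :
    ∀ᶠ ε in 𝓝[>] (0 : ℝ), ∀ φ : E → ℝ, Continuous φ → 0 ≤ φ → (∀ w, ε ≤ ‖w‖ → φ w = 0) →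
      Z.card * ∫ w, φ w ∂μ ≤ ∫ x in U, φ (h x) * |(fderiv ℝ h x).det| ∂μ := by
  obtain ⟨V, hVU, -, -, hV⟩ :=
    exists_isOpen_setIntegral_comp_mul_abs_det (μ := μ) hU hUb hh hZU hZ
  filter_upwards [hV] with ε hε φ hφ hφ0 hφε
  rw [← hε φ hφ hφε]
  exact setIntegral_mono_set
    (integrableOn_of_continuousAt hUb fun x hx => continuousAt_comp_mul_abs_det hφ (hh x hx))
    (.of_forall fun x => mul_nonneg (hφ0 _) (abs_nonneg _)) hVU.eventuallyLE

theorem setIntegral_comp_mul_abs_det_eq_card (hU : IsOpen U) (hUb : Bornology.IsBounded U)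
    (hh : ∀ x ∈ closure U, ContDiffAt ℝ 1 h x) {Z : Finset E} (hZU : ↑Z ⊆ U)
    (hZ : ∀ z ∈ Z, h z = 0 ∧ (fderiv ℝ h z).det ≠ 0) (hall : ∀ x ∈ closure U, h x = 0 → x ∈ Z) :
    ∀ᶠ ε in 𝓝[>] (0 : ℝ), ∀ φ : E → ℝ, Continuous φ → (∀ w, ε ≤ ‖w‖ → φ w = 0) →
      ∫ x in U, φ (h x) * |(fderiv ℝ h x).det| ∂μ = Z.card * ∫ w, φ w ∂μ := by
  obtain ⟨V, hVU, hVo, hZV, hV⟩ :=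
    exists_isOpen_setIntegral_comp_mul_abs_det (μ := μ) hU hUb hh hZU hZ
  have hcont : ContinuousOn (fun x => ‖h x‖) (closure U \ V) := fun x hx =>
    (hh x hx.1).continuousAt.norm.continuousWithinAt
  obtain ⟨c, hc, hcV⟩ := (hUb.isCompact_closure.diff hVo).exists_forall_le' hcont (a := 0)
    fun x hx => norm_pos_iff.2 fun h0 => hx.2 (hZV (hall x hx.1 h0))
  filter_upwards [hV, Ioo_mem_nhdsGT hc] with ε hε hεc φ hφ hφε
  rw [← hε φ hφ hφε]
  refine setIntegral_eq_of_subset_of_forall_sdiff_eq_zero hU.measurableSet hVU fun x hx => ?_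
  rw [hφε _ (hεc.2.le.trans (hcV x ⟨subset_closure hx.1, hx.2⟩)), zero_mul]

variable {h₀ h₁ : E → E}

theorem exists_setIntegral_comp_mul_abs_det_eq (hU : IsOpen U) (hUb : Bornology.IsBounded U)
    (hh₀ : ∀ x ∈ closure U, ContDiffAt ℝ 2 h₀ x) (hh₁ : ∀ x ∈ closure U, ContDiffAt ℝ 2 h₁ x)
    (hdet₀ : ∀ x ∈ U, 0 ≤ (fderiv ℝ h₀ x).det) (hdet₁ : ∀ x ∈ U, 0 ≤ (fderiv ℝ h₁ x).det)
    (hseg : ∀ x ∈ frontier U, 0 ∉ segment ℝ (h₀ x) (h₁ x)) :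
    ∃ c > 0, ∀ φ : E → ℝ, ContDiff ℝ 1 φ → tsupport φ ⊆ ball 0 c →
      ∫ x in U, φ (h₁ x) * |(fderiv ℝ h₁ x).det| ∂μ =
        ∫ x in U, φ (h₀ x) * |(fderiv ℝ h₀ x).det| ∂μ := by
  have hcont : ContinuousOn (fun p : ℝ × E => ‖h₀ p.2 + p.1 • (h₁ p.2 - h₀ p.2)‖)
      (Icc 0 1 ×ˢ frontier U) := fun p hp => by
    have hp2 := frontier_subset_closure hp.2
    have hcont₀ : ContinuousAt (fun p : ℝ × E => h₀ p.2) p :=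
      (hh₀ p.2 hp2).continuousAt.comp continuousAt_snd
    have hcont₁ : ContinuousAt (fun p : ℝ × E => h₁ p.2) p :=
      (hh₁ p.2 hp2).continuousAt.comp continuousAt_snd
    exact (hcont₀.add (continuousAt_fst.smul (hcont₁.sub hcont₀))).norm.continuousWithinAt
  obtain ⟨c, hc, hcle⟩ := (isCompact_Icc.prod (hUb.isCompact_closure.of_isClosed_subset
    isClosed_frontier frontier_subset_closure)).exists_forall_le' hcont (a := 0) fun p hp =>
      norm_pos_iff.2 fun h0 => hseg p.2 hp.2 (segment_eq_image' ℝ (h₀ p.2) _ ▸ ⟨p.1, hp.1, h0⟩)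
  refine ⟨c, hc, fun φ hφ hφc => ?_⟩
  have hinv := setIntegral_comp_mul_det_add (μ := μ) (g := fun x => h₁ x - h₀ x) hU hUb hφ hh₀
    (fun x hx => (hh₁ x hx).sub (hh₀ x hx)) fun t ht x hx hmem =>
      (hcle (t, x) ⟨ht, hx⟩).not_gt (mem_ball_zero_iff.1 (hφc hmem))
  simp only [add_sub_cancel] at hinv
  have habs {h : E → E} (hdet : ∀ x ∈ U, 0 ≤ (fderiv ℝ h x).det) :
      ∫ x in U, φ (h x) * |(fderiv ℝ h x).det| ∂μ = ∫ x in U, φ (h x) * (fderiv ℝ h x).det ∂μ :=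
    setIntegral_congr_fun hU.measurableSet fun x hx => by simp only [abs_of_nonneg (hdet x hx)]
  rw [habs hdet₁, habs hdet₀, hinv]

omit [MeasurableSpace E] [BorelSpace E] in
/-- A Rouché-type comparison: maps of nonnegative Jacobian have only zeros of positive local degree,
so no more than the total degree of them, which is the number of zeros once all are regular. -/
theorem finite_and_card_le_ncard_of_zero_notMem_segment (hU : IsOpen U)
    (hUb : Bornology.IsBounded U)
    (hh₀ : ∀ x ∈ closure U, ContDiffAt ℝ 2 h₀ x) (hh₁ : ∀ x ∈ closure U, ContDiffAt ℝ 2 h₁ x)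
    (hdet₀ : ∀ x ∈ U, 0 ≤ (fderiv ℝ h₀ x).det) (hdet₁ : ∀ x ∈ U, 0 ≤ (fderiv ℝ h₁ x).det)
    (hseg : ∀ x ∈ frontier U, 0 ∉ segment ℝ (h₀ x) (h₁ x))
    (hreg : ∀ x ∈ U, h₀ x = 0 → (fderiv ℝ h₀ x).det ≠ 0) {Z : Finset E} (hZU : ↑Z ⊆ U)
    (hZ : ∀ z ∈ Z, h₁ z = 0 ∧ (fderiv ℝ h₁ z).det ≠ 0) :
    {x ∈ U | h₀ x = 0}.Finite ∧ Z.card ≤ {x ∈ U | h₀ x = 0}.ncard := by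
  let : MeasurableSpace E := borel E
  have : BorelSpace E := ⟨rfl⟩
  set μ : Measure E := Measure.addHaar
  have hzeroU (x : E) (hx : x ∈ closure U) (h0 : h₀ x = 0) : x ∈ U := by
    by_contra hxU
    exact hseg x (hU.frontier_eq ▸ ⟨hx, hxU⟩) (h0 ▸ left_mem_segment ℝ _ _)
  have hC₀ (x : E) (hx : x ∈ closure U) : ContDiffAt ℝ 1 h₀ x := (hh₀ x hx).of_le one_le_two
  have hC₁ (x : E) (hx : x ∈ closure U) : ContDiffAt ℝ 1 h₁ x := (hh₁ x hx).of_le one_le_two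
  have hfin : {x ∈ U | h₀ x = 0}.Finite :=
    finite_setOf_eq_zero hUb hC₀ fun x hx h0 => hreg x (hzeroU x hx h0) h0
  refine ⟨hfin, ?_⟩
  have hmem (x : E) : x ∈ hfin.toFinset ↔ x ∈ U ∧ h₀ x = 0 := hfin.mem_toFinset
  obtain ⟨c, hc, hinv⟩ :=
    exists_setIntegral_comp_mul_abs_det_eq (μ := μ) hU hUb hh₀ hh₁ hdet₀ hdet₁ hseg
  have hle := card_mul_integral_le (μ := μ) hU hUb hC₁ hZU hZ
  have heq := setIntegral_comp_mul_abs_det_eq_card (μ := μ) hU hUb hC₀ (Z := hfin.toFinset)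
    (fun x hx => ((hmem x).1 hx).1)
    (fun z hz => ⟨((hmem z).1 hz).2, hreg z ((hmem z).1 hz).1 ((hmem z).1 hz).2⟩)
    fun x hx h0 => (hmem x).2 ⟨hzeroU x hx h0, h0⟩
  obtain ⟨ε, ⟨hle, heq⟩, hε0, hεc⟩ := ((hle.and heq).and (Ioo_mem_nhdsGT hc)).exists
  set φ : ContDiffBump (0 : E) := ⟨ε / 2, ε, half_pos hε0, half_lt_self hε0⟩
  have hφε (w : E) (hw : ε ≤ ‖w‖) : φ w = 0 := φ.zero_of_le_dist (by rwa [dist_zero_right])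
  have hφc : tsupport φ ⊆ ball 0 c := φ.tsupport_eq.trans_subset (closedBall_subset_ball hεc)
  have hcount : (Z.card : ℝ) * ∫ w, φ w ∂μ ≤ hfin.toFinset.card * ∫ w, φ w ∂μ := by
    rw [← heq φ φ.continuous hφε, ← hinv φ φ.contDiff hφc]
    exact hle φ φ.continuous (fun _ => φ.nonneg) hφε
  rw [ncard_eq_toFinset_card _ hfin]
  exact_mod_cast le_of_mul_le_mul_right hcount φ.integral_pos

end ZeroCount

section ComplexDegree

variable {E : Type*} [NormedAddCommGroup E] [NormedSpace ℂ E]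

theorem det_restrictScalars_eq_normSq (A : E →L[ℂ] E) :
    (A.restrictScalars ℝ).det = Complex.normSq A.det :=
  (LinearMap.det_restrictScalars (f := (A : E →ₗ[ℂ] E))).trans (Algebra.norm_complex_apply _)

variable {f g : E → E}

theorem det_fderiv_real_eq_normSq {x : E} (hf : DifferentiableAt ℂ f x) :
    (fderiv ℝ f x).det = Complex.normSq (fderiv ℂ f x).det := by
  rw [hf.fderiv_restrictScalars ℝ, det_restrictScalars_eq_normSq]

variable [FiniteDimensional ℂ E]

/-- Holomorphic maps have nonnegative real Jacobian, so the real comparison applies to them. -/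
theorem finite_and_card_le_ncard_of_norm_sub_lt {U : Set E} (hU : IsOpen U)
    (hUb : Bornology.IsBounded U) (hf : AnalyticOnNhd ℂ f (closure U))
    (hg : AnalyticOnNhd ℂ g (closure U)) {c : ℝ} {q : E} (hc : ∀ x ∈ frontier U, c ≤ ‖f x‖)
    (hq : ‖q‖ < c) (hfg : ∀ x ∈ frontier U, ‖g x - f x‖ < c)
    (hreg : ∀ x ∈ U, f x = q → (fderiv ℂ f x).det ≠ 0) {Z : Finset E} (hZU : ↑Z ⊆ U)
    (hZ : ∀ z ∈ Z, g z = 0 ∧ (fderiv ℂ g z).det ≠ 0) :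
    {x ∈ U | f x = q}.Finite ∧ Z.card ≤ {x ∈ U | f x = q}.ncard := by
  have hfq : AnalyticOnNhd ℂ (fun x => f x - q) (closure U) := hf.sub analyticOnNhd_const
  have hsmooth {h : E → E} (hh : AnalyticOnNhd ℂ h (closure U)) :
      (∀ x ∈ closure U, ContDiffAt ℝ 2 h x) ∧ ∀ x ∈ U, 0 ≤ (fderiv ℝ h x).det :=
    ⟨fun x hx => (hh x hx).contDiffAt.restrict_scalars ℝ, fun x hx =>
      (Complex.normSq_nonneg _).trans_eq
        (det_fderiv_real_eq_normSq (hh x (subset_closure hx)).differentiableAt).symm⟩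
  have hdet {h : E → E} (hh : AnalyticOnNhd ℂ h (closure U)) {x : E} (hx : x ∈ U) :
      (fderiv ℝ h x).det ≠ 0 ↔ (fderiv ℂ h x).det ≠ 0 := by
    rw [det_fderiv_real_eq_normSq (hh x (subset_closure hx)).differentiableAt, Ne,
      Complex.normSq_eq_zero]
  have hseg (x : E) (hx : x ∈ frontier U) : 0 ∉ segment ℝ (f x - q) (g x) := fun h0 =>
    (hc x hx).not_gt <| by
      simpa using (convex_ball (f x) c).segment_subset (mem_ball_iff_norm'.2 (by simpa using hq))
        (mem_ball_iff_norm.2 (hfg x hx)) h0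
  have hcount := finite_and_card_le_ncard_of_zero_notMem_segment hU hUb (hsmooth hfq).1
    (hsmooth hg).1 (hsmooth hfq).2 (hsmooth hg).2 hseg
    (fun x hx h0 => (hdet hfq hx).2 <| by
      simpa only [fderiv_sub_const] using hreg x hx (sub_eq_zero.1 h0))
    hZU (fun z hz => ⟨(hZ z hz).1, (hdet hg (hZU hz)).2 (hZ z hz).2⟩)
  simpa only [sub_eq_zero] using hcount

end ComplexDegree

section ZeroOrder

theorem isRegularValueOn_iff_det_ne_zero {f : Cn n → Cn n} {s : Set (Cn n)} {q : Cn n} :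
    IsRegularValueOn f s q ↔ ∀ x ∈ s, f x = q → (fderiv ℂ f x).det ≠ 0 := by
  refine forall₃_congr fun x _ _ => ?_
  rw [← isUnit_iff_ne_zero]
  exact (Module.End.isUnit_iff _).symm.trans (LinearMap.isUnit_iff_isUnit_det _)

theorem exists_isRegularValueOn_norm_lt {f : Cn n → Cn n} {s : Set (Cn n)}
    (hf : ∀ x ∈ s, DifferentiableAt ℂ f x) {ε : ℝ} (hε : 0 < ε) :
    ∃ q, ‖q‖ < ε ∧ IsRegularValueOn f s q := by
  set critical : Set (Cn n) := {x ∈ s | (fderiv ℂ f x).det = 0}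
  have hnull : volume (f '' critical) = 0 :=
    addHaar_image_eq_zero_of_det_fderivWithin_eq_zero volume
      (fun x hx => ((hf x hx.1).hasFDerivAt.restrictScalars ℝ).hasFDerivWithinAt)
      fun x hx => by rw [det_restrictScalars_eq_normSq, hx.2, map_zero]
  have hball : ¬ ball 0 ε ⊆ f '' critical := fun hsub =>
    (measure_ball_pos volume (0 : Cn n) hε).ne' (measure_mono_null hsub hnull)
  obtain ⟨q, hq, hqcrit⟩ := not_subset.1 hball
  exact ⟨q, mem_ball_zero_iff.1 hq, isRegularValueOn_iff_det_ne_zero.2 fun x hx hxq hdet =>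
    hqcrit ⟨x, ⟨hx, hdet⟩, hxq⟩⟩

variable {f g : Cn n → Cn n} {p : Cn n}

theorem exists_pos_le_norm_of_mem_sphere {r : ℝ} (hr : 0 < r)
    (hf : AnalyticOnNhd ℂ f (closedBall p r)) (hz : ∀ x ∈ closedBall p r, f x = 0 → x = p) :
    ∃ c > 0, ∀ x ∈ sphere p r, c ≤ ‖f x‖ :=
  (isCompact_sphere p r).exists_forall_le'
    (hf.continuousOn.mono sphere_subset_closedBall).norm fun x hx =>
      norm_pos_iff.2 fun h0 => ne_of_mem_sphere hx hr.ne' (hz x (sphere_subset_closedBall hx) h0)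

theorem finite_and_card_le_ncard_ball {r c : ℝ} (hr : 0 < r)
    (hf : AnalyticOnNhd ℂ f (closedBall p r)) (hg : AnalyticOnNhd ℂ g (closedBall p r))
    {q : Cn n} (hc : ∀ x ∈ sphere p r, c ≤ ‖f x‖) (hq : ‖q‖ < c)
    (hfg : ∀ x ∈ sphere p r, ‖g x - f x‖ < c) (hreg : IsRegularValueOn f (ball p r) q)
    {Z : Finset (Cn n)} (hZ : ∀ z ∈ Z, z ∈ ball p r ∧ g z = 0 ∧ (fderiv ℂ g z).det ≠ 0) :
    {x ∈ ball p r | f x = q}.Finite ∧ Z.card ≤ {x ∈ ball p r | f x = q}.ncard := by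
  rw [← closure_ball p hr.ne'] at hf hg
  rw [← frontier_ball p hr.ne'] at hc hfg
  exact finite_and_card_le_ncard_of_norm_sub_lt isOpen_ball isBounded_ball hf hg hc hq hfg
    (isRegularValueOn_iff_det_ne_zero.1 hreg) (fun z hz => (hZ z hz).1) fun z hz => (hZ z hz).2

theorem ncard_le_ncard_of_isRegularValueOn {r c : ℝ} (hr : 0 < r)
    (hf : AnalyticOnNhd ℂ f (closedBall p r)) (hc : ∀ x ∈ sphere p r, c ≤ ‖f x‖) {q q' : Cn n}
    (hq : ‖q‖ < c) (hq' : ‖q'‖ < c) (hreg : IsRegularValueOn f (ball p r) q)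
    (hreg' : IsRegularValueOn f (ball p r) q') :
    {x ∈ ball p r | f x = q'}.ncard ≤ {x ∈ ball p r | f x = q}.ncard := by
  have hf' : AnalyticOnNhd ℂ (fun x => f x - q') (closedBall p r) := hf.sub analyticOnNhd_const
  have hfin : {x ∈ ball p r | f x = q'}.Finite :=
    (finite_and_card_le_ncard_ball hr hf hf' hc hq' (by simpa using fun _ _ => hq') hreg'
      (Z := ∅) (by simp)).1
  rw [ncard_eq_toFinset_card _ hfin]
  refine (finite_and_card_le_ncard_ball hr hf hf' hc hq (by simpa using fun _ _ => hq') hreg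
    fun z hz => ?_).2
  obtain ⟨hz, hzq⟩ := hfin.mem_toFinset.1 hz
  exact ⟨hz, sub_eq_zero.2 hzq, by
    simpa only [fderiv_sub_const] using isRegularValueOn_iff_det_ne_zero.1 hreg' z hz hzq⟩

theorem exists_hasZeroOrder (hf : AnalyticAt ℂ f p) (hp : f p = 0)
    (hiso : ∀ᶠ x in 𝓝[≠] p, f x ≠ 0) : ∃ m, HasZeroOrder f p m := by
  obtain ⟨r, hr, hball⟩ := nhds_basis_closedBall.eventually_iff.1
    (hf.eventually_analyticAt.and (eventually_nhdsWithin_iff.1 hiso))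
  have han : AnalyticOnNhd ℂ f (closedBall p r) := fun x hx => (hball hx).1
  have hz (x : Cn n) (hx : x ∈ closedBall p r) (h0 : f x = 0) : x = p :=
    not_not.1 fun hne => (hball hx).2 hne h0
  obtain ⟨c, hc, hcle⟩ := exists_pos_le_norm_of_mem_sphere hr han hz
  have hregular (ε : ℝ) (hε : 0 < ε) : ∃ q, ‖q‖ < ε ∧ IsRegularValueOn f (ball p r) q :=
    exists_isRegularValueOn_norm_lt
      (fun x hx => (han x (ball_subset_closedBall hx)).differentiableAt) hε
  obtain ⟨q₀, hq₀, hreg₀⟩ := hregular c hc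
  exact ⟨_, r, hr, han, hp, hz, hregular, c, hc, fun q hq hreg =>
    (ncard_le_ncard_of_isRegularValueOn hr han hcle hq₀ hq hreg₀ hreg).antisymm
      (ncard_le_ncard_of_isRegularValueOn hr han hcle hq hq₀ hreg hreg₀)⟩

theorem le_of_hasZeroOrder {m K : ℕ} (hm : HasZeroOrder f p m)
    (hK : ∃ᶠ r in 𝓝[>] 0, ∀ ε > 0, ∃ g : Cn n → Cn n, AnalyticOnNhd ℂ g (closedBall p r) ∧
      (∀ x ∈ closedBall p r, ‖g x - f x‖ < ε) ∧ ∃ Z : Finset (Cn n), K ≤ Z.card ∧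
        ∀ z ∈ Z, z ∈ ball p r ∧ g z = 0 ∧ (fderiv ℂ g z).det ≠ 0) :
    K ≤ m := by
  obtain ⟨R, hR, han, -, hz, -, δ, hδ, hm⟩ := hm
  obtain ⟨r, happrox, hr, hrR⟩ := (hK.and_eventually (Ioo_mem_nhdsGT hR)).exists
  have hsub : closedBall p r ⊆ closedBall p R := closedBall_subset_closedBall hrR.le
  obtain ⟨C, hC, hCle⟩ := exists_pos_le_norm_of_mem_sphere hR han hz
  obtain ⟨c, hc, hcle⟩ :=
    exists_pos_le_norm_of_mem_sphere hr (han.mono hsub) fun x hx => hz x (hsub hx)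
  obtain ⟨q, hq, hreg⟩ := exists_isRegularValueOn_norm_lt (s := ball p R)
    (fun x hx => (han x (ball_subset_closedBall hx)).differentiableAt)
    (lt_min hδ (lt_min hC hc))
  obtain ⟨hqδ, hqC, hqc⟩ : ‖q‖ < δ ∧ ‖q‖ < C ∧ ‖q‖ < c := by simpa only [lt_min_iff] using hq
  obtain ⟨g, hg, hgf, Z, hKZ, hZ⟩ := happrox c hc
  have hballs : ball p r ⊆ ball p R := ball_subset_ball hrR.le
  have hle := (finite_and_card_le_ncard_ball hr (han.mono hsub) hg hcle hqc
    (fun x hx => hgf x (sphere_subset_closedBall hx)) (fun x hx => hreg x (hballs hx)) hZ).2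
  have hfin := (finite_and_card_le_ncard_ball hR han han hCle hqC
    (by simpa using fun _ _ => hC) hreg (Z := ∅) (by simp)).1
  calc K ≤ Z.card := hKZ
    _ ≤ {x ∈ ball p r | f x = q}.ncard := hle
    _ ≤ {x ∈ ball p R | f x = q}.ncard := ncard_le_ncard (fun x hx => ⟨hballs hx.1, hx.2⟩) hfin
    _ = m := hm q hqδ hreg

theorem le_zeroOrder {K : ℕ} (hf : AnalyticAt ℂ f p) (hp : f p = 0)
    (hiso : ∀ᶠ x in 𝓝[≠] p, f x ≠ 0)
    (hK : ∃ᶠ r in 𝓝[>] 0, ∀ ε > 0, ∃ g : Cn n → Cn n, AnalyticOnNhd ℂ g (closedBall p r) ∧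
      (∀ x ∈ closedBall p r, ‖g x - f x‖ < ε) ∧ ∃ Z : Finset (Cn n), K ≤ Z.card ∧
        ∀ z ∈ Z, z ∈ ball p r ∧ g z = 0 ∧ (fderiv ℂ g z).det ≠ 0) :
    K ≤ zeroOrder f p :=
  le_csInf (exists_hasZeroOrder hf hp hiso) fun _ hm => le_of_hasZeroOrder hm hK

end ZeroOrder

section Branches

/-- The equation `f x = ε • q` has a family of nondegenerate solutions, defined for small `ε > 0`,
whose coordinates have leading terms `l.2 i * ε ^ l.1 i`. -/
def HasBranch (f : Cn n → Cn n) (q : Cn n) (l : (Fin n → ℝ) × Cn n) : Prop :=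
  (∀ i, 0 < l.1 i ∧ l.2 i ≠ 0) ∧ ∃ x : ℝ → Cn n,
    (∀ᶠ ε in 𝓝[>] 0, f (x ε) = (ε : ℂ) • q ∧ (fderiv ℂ f (x ε)).det ≠ 0) ∧
    ∀ i, Tendsto (fun ε => x ε i / (ε ^ l.1 i : ℝ)) (𝓝[>] 0) (𝓝 (l.2 i))

theorem tendsto_ofReal_rpow_nhdsGT_zero {s : ℝ} (hs : 0 < s) :
    Tendsto (fun ε : ℝ => ((ε ^ s : ℝ) : ℂ)) (𝓝[>] 0) (𝓝 0) := by
  simpa [Function.comp_def, Real.zero_rpow hs.ne'] using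
    (Complex.continuous_ofReal.continuousAt.comp
      (Real.continuousAt_rpow_const 0 s (.inr hs.le))).tendsto.mono_left nhdsWithin_le_nhds

theorem tendsto_zero_of_tendsto_div_rpow {a : ℝ → ℂ} {s : ℝ} {z : ℂ} (hs : 0 < s)
    (ha : Tendsto (fun ε => a ε / (ε ^ s : ℝ)) (𝓝[>] 0) (𝓝 z)) :
    Tendsto a (𝓝[>] 0) (𝓝 0) := by
  have hprod := ha.mul (tendsto_ofReal_rpow_nhdsGT_zero hs)
  rw [mul_zero] at hprod
  refine hprod.congr' ?_
  filter_upwards [self_mem_nhdsWithin] with ε hε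
  exact div_mul_cancel₀ _ (Complex.ofReal_ne_zero.2 (Real.rpow_pos_of_pos hε s).ne')

theorem exponent_le_of_frequently_eq {a b : ℝ → ℂ} {s t : ℝ} {z w : ℂ} (hz : z ≠ 0)
    (ha : Tendsto (fun ε => a ε / (ε ^ s : ℝ)) (𝓝[>] 0) (𝓝 z))
    (hb : Tendsto (fun ε => b ε / (ε ^ t : ℝ)) (𝓝[>] 0) (𝓝 w))
    (hab : ∃ᶠ ε in 𝓝[>] 0, a ε = b ε) : t ≤ s := by
  by_contra! hst
  have hzero : Tendsto (fun ε => b ε / (ε ^ s : ℝ)) (𝓝[>] 0) (𝓝 0) := by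
    refine tendsto_zero_of_tendsto_div_rpow (sub_pos.2 hst) (hb.congr' ?_)
    filter_upwards [self_mem_nhdsWithin] with ε hε
    rw [div_div, ← Complex.ofReal_mul, ← Real.rpow_add hε, add_sub_cancel]
  exact hz (tendsto_nhds_unique_of_frequently_eq ha hzero
    (hab.mono fun ε h => by simp only [h]))

theorem eventually_ne_of_leadingTerm_ne {a b : ℝ → ℂ} {s t : ℝ} {z w : ℂ} (hz : z ≠ 0)
    (hw : w ≠ 0) (ha : Tendsto (fun ε => a ε / (ε ^ s : ℝ)) (𝓝[>] 0) (𝓝 z))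
    (hb : Tendsto (fun ε => b ε / (ε ^ t : ℝ)) (𝓝[>] 0) (𝓝 w)) (hne : (s, z) ≠ (t, w)) :
    ∀ᶠ ε in 𝓝[>] 0, a ε ≠ b ε := by
  by_contra hev
  have hab : ∃ᶠ ε in 𝓝[>] 0, a ε = b ε := (not_eventually.1 hev).mono fun _ => not_not.1
  obtain rfl : s = t := (exponent_le_of_frequently_eq hw hb ha (hab.mono fun _ => Eq.symm)).antisymm
    (exponent_le_of_frequently_eq hz ha hb hab)
  exact hne (congrArg _ (tendsto_nhds_unique_of_frequently_eq ha hb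
    (hab.mono fun ε h => by simp only [h])))

theorem exists_finset_of_hasBranch {f : Cn n → Cn n} {q : Cn n}
    {Λ : Finset ((Fin n → ℝ) × Cn n)} (hΛ : ∀ l ∈ Λ, HasBranch f q l) {ρ : ℝ} (hρ : 0 < ρ) :
    ∀ᶠ ε : ℝ in 𝓝[>] 0, ∃ Z : Finset (Cn n), Z.card = Λ.card ∧
      ∀ z ∈ Z, z ∈ ball 0 ρ ∧ f z = (ε : ℂ) • q ∧ (fderiv ℂ f z).det ≠ 0 := by
  choose! hlead x hsol hlim using hΛ
  have hball : ∀ᶠ ε in 𝓝[>] 0, ∀ l ∈ Λ, x l ε ∈ ball 0 ρ :=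
    (Finset.eventually_all Λ).2 fun l hl =>
      (tendsto_pi_nhds.2 fun i =>
        tendsto_zero_of_tendsto_div_rpow (hlead l hl i).1 (hlim l hl i)).eventually
          (ball_mem_nhds 0 hρ)
  have hinj : ∀ᶠ ε in 𝓝[>] 0, ∀ l ∈ Λ, ∀ l' ∈ Λ, l ≠ l' → x l ε ≠ x l' ε := by
    refine (Finset.eventually_all Λ).2 fun l hl => (Finset.eventually_all Λ).2 fun l' hl' => ?_
    refine eventually_imp_distrib_left.2 fun hne => ?_
    obtain ⟨i, hi⟩ : ∃ i, (l.1 i, l.2 i) ≠ (l'.1 i, l'.2 i) := by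
      by_contra! h
      simp only [Prod.mk.injEq, forall_and] at h
      exact hne (Prod.ext (funext h.1) (funext h.2))
    exact (eventually_ne_of_leadingTerm_ne (hlead l hl i).2 (hlead l' hl' i).2 (hlim l hl i)
      (hlim l' hl' i) hi).mono fun ε h h' => h (congrFun h' i)
  filter_upwards [hball, hinj, (Finset.eventually_all Λ).2 hsol] with ε hball hinj hsol
  refine ⟨Λ.image (x · ε), Finset.card_image_of_injOn fun l hl l' hl' h =>
    not_imp_not.1 (hinj l hl l' hl') h, Finset.forall_mem_image.2 fun l hl =>
    ⟨hball l hl, hsol l hl⟩⟩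

theorem le_zeroOrder_of_hasBranch {f : Cn n → Cn n} {K : ℕ} (hf : AnalyticAt ℂ f 0)
    (hiso : IsolatedZeroAt0 f)
    (hK : ∃ᶠ r in 𝓝[>] 0, ∀ ε > 0, ∃ g : Cn n → Cn n, AnalyticOnNhd ℂ g (closedBall 0 r) ∧
      (∀ x ∈ closedBall 0 r, ‖g x - f x‖ < ε) ∧ ∃ (q : Cn n) (Λ : Finset ((Fin n → ℝ) × Cn n)),
        K ≤ Λ.card ∧ ∀ l ∈ Λ, HasBranch g q l) :
    K ≤ zeroOrder f 0 := by
  refine le_zeroOrder hf hiso.1 hiso.2 ((hK.and_eventually self_mem_nhdsWithin).mono ?_)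
  rintro r ⟨happrox, hr⟩ ε hε
  obtain ⟨g, hg, hgf, q, Λ, hKΛ, hΛ⟩ := happrox (ε / 2) (half_pos hε)
  have hsmall : ∀ᶠ δ : ℝ in 𝓝[>] 0, ‖(δ : ℂ) • q‖ < ε / 2 := by
    have hcont : Continuous fun δ : ℝ => ‖(δ : ℂ) • q‖ := by fun_prop
    exact nhdsWithin_le_nhds ((hcont.tendsto' 0 0 (by simp)).eventually_lt_const (half_pos hε))
  obtain ⟨δ, hδ, Z, hZΛ, hZ⟩ := (hsmall.and (exists_finset_of_hasBranch hΛ hr)).exists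
  refine ⟨fun x => g x - (δ : ℂ) • q, hg.sub analyticOnNhd_const, fun x hx => ?_, Z,
    hKΛ.trans_eq hZΛ.symm, fun z hz => ⟨(hZ z hz).1, sub_eq_zero.2 (hZ z hz).2.1, ?_⟩⟩
  · calc ‖g x - (δ : ℂ) • q - f x‖ = ‖(g x - f x) - (δ : ℂ) • q‖ := by rw [sub_right_comm]
      _ ≤ ‖g x - f x‖ + ‖(δ : ℂ) • q‖ := norm_sub_le _ _
      _ < ε := by linarith [hgf x hx]
  · simpa only [fderiv_sub_const] using (hZ z hz).2.2

end Branches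

section InitialForms

/-- The weighted dilation `x i ↦ σ ^ w i * x i`. -/
def dilation (w : Fin n → ℕ) (σ : ℂ) : Cn n →L[ℂ] Cn n :=
  (Matrix.toLin' (Matrix.diagonal fun i => σ ^ w i)).toContinuousLinearMap

theorem dilation_apply (w : Fin n → ℕ) (σ : ℂ) (z : Cn n) (i : Fin n) :
    dilation w σ z i = σ ^ w i * z i := by
  simp [dilation, Matrix.mulVec_diagonal]

theorem det_dilation_ne_zero (w : Fin n → ℕ) {σ : ℂ} (hσ : σ ≠ 0) : (dilation w σ).det ≠ 0 := by
  rw [dilation, LinearMap.det_toContinuousLinearMap, LinearMap.det_toLin', Matrix.det_diagonal]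
  exact Finset.prod_ne_zero_iff.2 fun i _ => pow_ne_zero _ hσ

theorem analyticAt_dilation (w : Fin n → ℕ) (p : ℂ × Cn n) :
    AnalyticAt ℂ (fun p : ℂ × Cn n => dilation w p.1 p.2) p := by
  refine analyticAt_pi_iff.2 fun i => ?_
  simp only [dilation_apply]
  exact (analyticAt_fst.pow _).mul (analyticAt_pi_iff.1 analyticAt_snd i)

theorem dilation_zero {w : Fin n → ℕ} (hw : ∀ i, 0 < w i) (z : Cn n) : dilation w 0 z = 0 := by
  ext i
  rw [dilation_apply, zero_pow (hw i).ne', zero_mul, Pi.zero_apply]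

theorem fderiv_apply_of_dilation_eq {w : Fin n → ℕ} {α : ℕ} {G : Cn n → ℂ} {z : Cn n}
    (hG : DifferentiableAt ℂ G z)
    (hhom : ∀ᶠ τ in 𝓝 (1 : ℂ), G (dilation w τ z) = τ ^ α * G z) :
    fderiv ℂ G z (fun i => w i * z i) = α * G z := by
  have hdil : HasDerivAt (fun τ => dilation w τ z) (fun i => w i * z i) 1 := by
    refine hasDerivAt_pi.2 fun i => ?_
    simpa [dilation_apply] using (hasDerivAt_pow (w i) (1 : ℂ)).mul_const (z i)
  have hone : dilation w 1 z = z := by ext i; simp [dilation_apply]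
  have hleft : HasDerivAt (fun τ => G (dilation w τ z)) (fderiv ℂ G z fun i => w i * z i) 1 :=
    HasFDerivAt.comp_hasDerivAt 1 (by simpa only [hone] using hG.hasFDerivAt) hdil
  have hright : HasDerivAt (fun τ : ℂ => τ ^ α * G z) (α * G z) 1 := by
    simpa using (hasDerivAt_pow α (1 : ℂ)).mul_const (G z)
  exact hleft.unique (hright.congr_of_eventuallyEq hhom)

/-- On the torus, `G` is the part of weighted degree `α` of `u`, whose lower-degree parts vanish:
`u (dilation w σ z) = σ ^ α * (G z + O(σ))`. -/
def HasInitialForm (w : Fin n → ℕ) (α : ℕ) (u G : Cn n → ℂ) : Prop :=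
  ∃ F : ℂ × Cn n → ℂ, (∀ σ z, u (dilation w σ z) = σ ^ α * F (σ, z)) ∧
    ∀ z, (∀ i, z i ≠ 0) → AnalyticAt ℂ F (0, z) ∧ F (0, z) = G z

variable {w : Fin n → ℕ} {α : ℕ} {u v G H : Cn n → ℂ}

theorem HasInitialForm.add (hu : HasInitialForm w α u G) (hv : HasInitialForm w α v H) :
    HasInitialForm w α (fun x => u x + v x) (fun z => G z + H z) := by
  obtain ⟨F, hF, hF0⟩ := hu
  obtain ⟨F', hF', hF'0⟩ := hv
  exact ⟨fun p => F p + F' p, fun σ z => by simp only [hF, hF', mul_add],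
    fun z hz =>
    ⟨(hF0 z hz).1.add (hF'0 z hz).1, congrArg₂ _ (hF0 z hz).2 (hF'0 z hz).2⟩⟩

theorem HasInitialForm.congr (hu : HasInitialForm w α u G)
    (hGH : ∀ z, (∀ i, z i ≠ 0) → G z = H z) : HasInitialForm w α u H := by
  obtain ⟨F, hF, hF0⟩ := hu
  exact ⟨F, hF, fun z hz => ⟨(hF0 z hz).1, (hF0 z hz).2.trans (hGH z hz)⟩⟩

theorem HasInitialForm.zero_of_lt (hu : HasInitialForm w α u G) {β : ℕ} (hβ : β < α) :
    HasInitialForm w β u 0 := by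
  obtain ⟨F, hF, hF0⟩ := hu
  refine ⟨fun p => p.1 ^ (α - β) * F p, fun σ z => ?_, fun z hz => ⟨?_, ?_⟩⟩
  · rw [hF, ← mul_assoc, ← pow_add, Nat.add_sub_cancel' hβ.le]
  · exact (analyticAt_fst.pow _).mul (hF0 z hz).1
  · simp [zero_pow (Nat.sub_pos_of_lt hβ).ne']

theorem hasInitialForm_monomial_mul {e : Cn n → ℂ} (he : AnalyticAt ℂ e 0) (hw : ∀ i, 0 < w i)
    (a : Fin n → ℕ) : HasInitialForm w (∑ i, w i * a i) (fun x => (∏ i, x i ^ a i) * e x)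
      (fun z => (∏ i, z i ^ a i) * e 0) := by
  refine ⟨fun p => (∏ i, p.2 i ^ a i) * e (dilation w p.1 p.2), fun σ z => ?_, fun z _ => ⟨?_, ?_⟩⟩
  · simp only [dilation_apply, mul_pow, ← pow_mul, Finset.prod_mul_distrib,
      Finset.prod_pow_eq_pow_sum, mul_assoc]
  · have hmono : AnalyticAt ℂ (fun p : ℂ × Cn n => ∏ i, p.2 i ^ a i) (0, z) :=
      Finset.analyticAt_fun_prod _ fun i _ => (analyticAt_pi_iff.1 analyticAt_snd i).pow _
    exact hmono.mul (AnalyticAt.comp_of_eq he (analyticAt_dilation w (0, z)) (dilation_zero hw z))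
  · simp only [dilation_zero hw]

theorem exists_implicit_solution {E : Type*} [NormedAddCommGroup E] [NormedSpace ℂ E]
    [FiniteDimensional ℂ E] {F : ℂ × E → E} {z₀ : E} (hF : AnalyticAt ℂ F (0, z₀))
    (hdet : (fderiv ℂ (fun z => F (0, z)) z₀).det ≠ 0) :
    ∃ ψ : ℂ → E, Tendsto ψ (𝓝 0) (𝓝 z₀) ∧ ∀ᶠ σ in 𝓝 0, F (σ, ψ σ) = F (0, z₀) ∧
      DifferentiableAt ℂ (fun z => F (σ, z)) (ψ σ) ∧
      (fderiv ℂ (fun z => F (σ, z)) (ψ σ)).det ≠ 0 := by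
  have : CompleteSpace E := FiniteDimensional.complete ℂ E
  have hpartial {p : ℂ × E} (hp : AnalyticAt ℂ F p) :
      HasFDerivAt (fun z => F (p.1, z)) (fderiv ℂ F p ∘L .inr ℂ ℂ E) p.2 :=
    HasFDerivAt.comp p.2 hp.differentiableAt.hasFDerivAt (hasFDerivAt_prodMk_right p.1 p.2)
  rw [(hpartial hF).fderiv] at hdet
  have hinv : (fderiv ℂ F (0, z₀) ∘L .inr ℂ ℂ E).IsInvertible :=
    ⟨ContinuousLinearMap.toContinuousLinearEquivOfDetNeZero _ hdet,
      ContinuousLinearMap.coe_toContinuousLinearEquivOfDetNeZero _ hdet⟩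
  have hstrict := hF.hasStrictFDerivAt
  set ψ := hstrict.implicitFunctionOfProdDomain hinv
  have hψ : Tendsto ψ (𝓝 0) (𝓝 z₀) := hstrict.tendsto_implicitFunctionOfProdDomain hinv
  have hcont : ContinuousAt (fun p => (fderiv ℂ F p ∘L .inr ℂ ℂ E).det) (0, z₀) :=
    ContinuousLinearMap.continuous_det.continuousAt.comp
      (hF.fderiv.continuousAt.clm_comp continuousAt_const)
  have hgraph : Tendsto (fun σ => (σ, ψ σ)) (𝓝 0) (𝓝 (0, z₀)) := tendsto_id.prodMk_nhds hψ
  refine ⟨ψ, hψ, ?_⟩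
  filter_upwards [hstrict.eventually_apply_implicitFunctionOfProdDomain hinv,
    hgraph.eventually hF.eventually_analyticAt, hgraph.eventually (hcont.eventually_ne hdet)]
    with σ hsol hσ hσdet
  exact ⟨hsol, (hpartial hσ).differentiableAt, by rwa [(hpartial hσ).fderiv]⟩

theorem det_fderiv_dilation_ne_zero {f F : Cn n → Cn n} {α : Fin n → ℕ} {σ : ℂ} (hσ : σ ≠ 0)
    (hfF : ∀ z, f (dilation w σ z) = dilation α σ (F z)) {z : Cn n}
    (hf : DifferentiableAt ℂ f (dilation w σ z)) (hF : DifferentiableAt ℂ F z)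
    (hdet : (fderiv ℂ F z).det ≠ 0) : (fderiv ℂ f (dilation w σ z)).det ≠ 0 := by
  have hchain : (fderiv ℂ f (dilation w σ z)) ∘L dilation w σ = dilation α σ ∘L fderiv ℂ F z :=
    (hf.hasFDerivAt.comp z (dilation w σ).hasFDerivAt).unique
      (((dilation α σ).hasFDerivAt.comp z hF.hasFDerivAt).congr_of_eventuallyEq
        (Eventually.of_forall hfF))
  have hprod : (fderiv ℂ f (dilation w σ z)).det * (dilation w σ).det =
      (dilation α σ).det * (fderiv ℂ F z).det := by
    simpa only [ContinuousLinearMap.det, ContinuousLinearMap.toLinearMap_comp, LinearMap.det_comp]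
      using congrArg ContinuousLinearMap.det hchain
  exact left_ne_zero_of_mul (hprod.trans_ne (mul_ne_zero (det_dilation_ne_zero α hσ) hdet))

theorem hasBranch_of_tendsto_dilation {f : Cn n → Cn n} {q z₀ : Cn n} {ψ : ℂ → Cn n}
    (hw : ∀ i, 0 < w i) (hα : 0 < α) (hz₀ : ∀ i, z₀ i ≠ 0) (hψ : Tendsto ψ (𝓝[≠] 0) (𝓝 z₀))
    (hsol : ∀ᶠ σ in 𝓝[≠] 0, f (dilation w σ (ψ σ)) = σ ^ α • q ∧
      (fderiv ℂ f (dilation w σ (ψ σ))).det ≠ 0) :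
    HasBranch f q (fun i => w i / α, z₀) := by
  set root : ℝ → ℂ := fun ε => ((ε ^ (α : ℝ)⁻¹ : ℝ) : ℂ)
  have hroot0 (ε : ℝ) (hε : ε ∈ Ioi 0) : root ε ≠ 0 :=
    Complex.ofReal_ne_zero.2 (Real.rpow_pos_of_pos hε _).ne'
  have hroot : Tendsto root (𝓝[>] 0) (𝓝[≠] 0) :=
    tendsto_nhdsWithin_iff.2 ⟨tendsto_ofReal_rpow_nhdsGT_zero (by positivity),
      eventually_mem_nhdsWithin.mono hroot0⟩
  have hpow (ε : ℝ) (hε : ε ∈ Ioi 0) (k : ℕ) : ((ε ^ (k / α : ℝ) : ℝ) : ℂ) = root ε ^ k := by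
    rw [div_eq_inv_mul, Real.rpow_mul_natCast (le_of_lt hε), Complex.ofReal_pow]
  refine ⟨fun i => ⟨have := hw i; by positivity, hz₀ i⟩,
    fun ε => dilation w (root ε) (ψ (root ε)), ?_, fun i => ?_⟩
  · filter_upwards [hroot.eventually hsol, self_mem_nhdsWithin] with ε hε hε0
    rwa [← hpow ε hε0 α, div_self (by positivity), Real.rpow_one] at hε
  · refine (tendsto_pi_nhds.1 (hψ.comp hroot) i).congr' ?_
    filter_upwards [self_mem_nhdsWithin] with ε hε
    rw [hpow ε hε, dilation_apply, mul_div_cancel_left₀ _ (pow_ne_zero _ (hroot0 ε hε)),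
      Function.comp_apply]

/-- Substituting `x = dilation w σ z` turns the equation `f x = σ ^ α i₀ • e_{i₀}` into an analytic
deformation of `G z = e_{i₀}`, to which the implicit function theorem applies. -/
theorem hasBranch_of_hasInitialForm {f G : Cn n → Cn n} {α : Fin n → ℕ} {i₀ : Fin n}
    (hw : ∀ i, 0 < w i) (hα : 0 < α i₀) (hf : AnalyticAt ℂ f 0)
    (hG : ∀ i, HasInitialForm w (α i) (fun x => f x i) (fun z => G z i)) {z₀ : Cn n}
    (hz₀ : ∀ i, z₀ i ≠ 0) (hsol : G z₀ = Pi.single i₀ 1) (hdet : (fderiv ℂ G z₀).det ≠ 0) :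
    HasBranch f (Pi.single i₀ 1) (fun i => w i / α i₀, z₀) := by
  choose F hfF hF using hG
  have hF0 : AnalyticAt ℂ (fun p i => F i p) (0, z₀) := analyticAt_pi_iff.2 fun i => (hF i z₀ hz₀).1
  have hG0 : (fun z i => F i (0, z)) =ᶠ[𝓝 z₀] G := by
    filter_upwards [eventually_all.2 fun i =>
      (continuous_apply i).continuousAt.eventually_ne (hz₀ i)] with z hz
    exact funext fun i => (hF i z hz).2
  obtain ⟨ψ, hψ, hψF⟩ := exists_implicit_solution hF0 (by rwa [hG0.fderiv_eq])
  have hrel (σ : ℂ) (z : Cn n) : f (dilation w σ z) = dilation α σ fun i => F i (σ, z) :=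
    funext fun i => (hfF i σ z).trans (dilation_apply α σ (fun i => F i (σ, z)) i).symm
  have hfan : ∀ᶠ σ in 𝓝 (0 : ℂ), AnalyticAt ℂ f (dilation w σ (ψ σ)) := by
    have hlim := (analyticAt_dilation w (0, z₀)).continuousAt.tendsto.comp
      (tendsto_id.prodMk_nhds hψ)
    rw [dilation_zero hw] at hlim
    exact hlim.eventually hf.eventually_analyticAt
  refine hasBranch_of_tendsto_dilation hw hα hz₀ (hψ.mono_left nhdsWithin_le_nhds) ?_
  filter_upwards [nhdsWithin_le_nhds hψF, nhdsWithin_le_nhds hfan, self_mem_nhdsWithin]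
    with σ ⟨hψsol, hdiff, hψdet⟩ hfan hσ
  refine ⟨?_, det_fderiv_dilation_ne_zero hσ (hrel σ) hfan.differentiableAt hdiff hψdet⟩
  rw [hrel, hψsol.trans (hG0.self_of_nhds.trans hsol)]
  ext i
  rw [dilation_apply, Pi.smul_apply, smul_eq_mul]
  obtain rfl | hi := eq_or_ne i i₀
  · rfl
  · simp only [Pi.single_eq_of_ne hi, mul_zero]

end InitialForms

section NewtonEdges

variable {k m p q p' q' : ℕ} {P Q : ℂ[X]} {u v : Cn 2 → ℂ}

/-- The quasi-homogeneous function of weights `(k, m)` supported on the line through `(p, q)` of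
direction `(-m, k)` in the Newton diagram: `x₀ ^ p * x₁ ^ q` times a polynomial in
`x₁ ^ k / x₀ ^ m`. It is only used where `x₀ ≠ 0`. -/
def edgeForm (k m p q : ℕ) (P : ℂ[X]) (z : Cn 2) : ℂ :=
  z 0 ^ p * z 1 ^ q * P.eval (z 1 ^ k / z 0 ^ m)

/-- The part of `u` on the edge through `(p, q)` of direction `(-m, k)` is `edgeForm k m p q P`, and
the rest of `u` lies above that edge. -/
def HasEdgePolynomial (k m p q : ℕ) (u : Cn 2 → ℂ) (P : ℂ[X]) : Prop :=
  HasInitialForm ![k, m] (k * p + m * q) u (edgeForm k m p q P)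

theorem HasEdgePolynomial.add (hu : HasEdgePolynomial k m p q u P)
    (hv : HasEdgePolynomial k m p q v Q) :
    HasEdgePolynomial k m p q (fun x => u x + v x) (P + Q) :=
  (HasInitialForm.add hu hv).congr fun z _ => by simp only [edgeForm, eval_add, mul_add]

theorem HasEdgePolynomial.sum {ι : Type*} {s : Finset ι} {u : ι → Cn 2 → ℂ} {P : ι → ℂ[X]}
    (hu : ∀ j ∈ s, HasEdgePolynomial k m p q (u j) (P j)) :
    HasEdgePolynomial k m p q (fun x => ∑ j ∈ s, u j x) (∑ j ∈ s, P j) := by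
  induction s using Finset.induction_on with
  | empty => exact ⟨0, fun _ _ => by simp, fun z _ => ⟨analyticAt_const, by simp [edgeForm]⟩⟩
  | insert j s hj ih =>
    simp only [Finset.sum_insert hj]
    exact (hu j (Finset.mem_insert_self j s)).add
      (ih fun i hi => hu i (Finset.mem_insert_of_mem hi))

theorem hasInitialForm_monomial_mul_two (hk : 0 < k) (hm : 0 < m) (a b : ℕ) {e : Cn 2 → ℂ}
    (he : AnalyticAt ℂ e 0) : HasInitialForm ![k, m] (k * a + m * b)
      (fun x => x 0 ^ a * x 1 ^ b * e x) (fun z => z 0 ^ a * z 1 ^ b * e 0) := by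
  simpa [Fin.sum_univ_two, Fin.prod_univ_two] using
    hasInitialForm_monomial_mul he (w := ![k, m]) (Fin.forall_fin_two.2 ⟨hk, hm⟩) ![a, b]

theorem hasEdgePolynomial_monomial_mul (hk : 0 < k) (hm : 0 < m) {a b j : ℕ} {e : Cn 2 → ℂ}
    (he : AnalyticAt ℂ e 0) (ha : a + m * j = p) (hb : b = q + k * j) :
    HasEdgePolynomial k m p q (fun x => x 0 ^ a * x 1 ^ b * e x) (C (e 0) * X ^ j) := by
  subst ha hb
  have hweight : k * a + m * (q + k * j) = k * (a + m * j) + m * q := by ring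
  refine (hweight ▸ hasInitialForm_monomial_mul_two hk hm a (q + k * j) he).congr fun z hz => ?_
  simp only [edgeForm, eval_mul, eval_C, eval_pow, eval_X, div_pow, ← pow_mul, pow_add]
  field_simp [hz 0]

theorem hasEdgePolynomial_zero_of_lt (hk : 0 < k) (hm : 0 < m) {a b : ℕ} {e : Cn 2 → ℂ}
    (he : AnalyticAt ℂ e 0) (hlt : k * p + m * q < k * a + m * b) :
    HasEdgePolynomial k m p q (fun x => x 0 ^ a * x 1 ^ b * e x) 0 :=
  ((hasInitialForm_monomial_mul_two hk hm a b he).zero_of_lt hlt).congr fun z _ => by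
    simp [edgeForm]

theorem differentiableAt_edgeForm {z : Cn 2} (hz : z 0 ≠ 0) :
    DifferentiableAt ℂ (edgeForm k m p q P) z := by
  have hm : z 0 ^ m ≠ 0 := pow_ne_zero m hz
  have hP := P.differentiable
  unfold edgeForm
  fun_prop (disch := assumption)

theorem fderiv_edgeForm_single_one {z : Cn 2} (hz : z 0 ≠ 0)
    (hroot : P.IsRoot (z 1 ^ k / z 0 ^ m)) :
    fderiv ℂ (edgeForm k m p q P) z (Pi.single 1 1) = z 0 ^ p * z 1 ^ q *
      (P.derivative.eval (z 1 ^ k / z 0 ^ m) * (k * z 1 ^ (k - 1) / z 0 ^ m)) := by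
  have hpartial : HasDerivAt (fun t => edgeForm k m p q P (Function.update z 1 t))
      (fderiv ℂ (edgeForm k m p q P) z (Pi.single 1 1)) (z 1) :=
    HasFDerivAt.comp_hasDerivAt (z 1) (l := edgeForm k m p q P)
      (by simpa only [Function.update_eq_self] using (differentiableAt_edgeForm hz).hasFDerivAt)
      (hasDerivAt_update z 1 (z 1))
  have hP : HasDerivAt (fun t => P.eval (t ^ k / z 0 ^ m))
      (P.derivative.eval (z 1 ^ k / z 0 ^ m) * (k * z 1 ^ (k - 1) / z 0 ^ m)) (z 1) :=
    (P.hasDerivAt _).comp (z 1) ((hasDerivAt_pow k (z 1)).div_const _)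
  have hprod := ((hasDerivAt_pow q (z 1)).const_mul (z 0 ^ p)).fun_mul hP
  rw [hroot.eq_zero, mul_zero, zero_add] at hprod
  exact hpartial.unique (by simpa [edgeForm] using hprod)

theorem fderiv_edgeForm_weightedVector {z : Cn 2} (hz : z 0 ≠ 0) :
    fderiv ℂ (edgeForm k m p q P) z ![k * z 0, m * z 1] =
      (k * p + m * q) * edgeForm k m p q P z := by
  have heuler := fderiv_apply_of_dilation_eq (w := ![k, m]) (α := k * p + m * q)
    (differentiableAt_edgeForm (k := k) (m := m) (p := p) (q := q) (P := P) hz) ?_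
  · convert heuler using 2
    · ext i
      fin_cases i <;> rfl
    · push_cast
      rfl
  · filter_upwards [eventually_ne_nhds one_ne_zero] with τ hτ
    have hinv : (τ ^ m * z 1) ^ k / (τ ^ k * z 0) ^ m = z 1 ^ k / z 0 ^ m := by
      field_simp
      ring
    simp only [edgeForm, dilation_apply, Matrix.cons_val_zero, Matrix.cons_val_one, hinv]
    ring

theorem det_ne_zero_of_apply_ne_zero {K : Type*} [Field K] {L : (Fin 2 → K) →ₗ[K] (Fin 2 → K)}
    {v w : Fin 2 → K} (hv₀ : L v 0 ≠ 0) (hv₁ : L v 1 = 0) (hw₁ : L w 1 ≠ 0) :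
    LinearMap.det L ≠ 0 := by
  rw [← LinearMap.det_toMatrix', ne_eq, ← Matrix.exists_vecMul_eq_zero_iff]
  rintro ⟨c, hc, hcL⟩
  have hann (x : Fin 2 → K) : c 0 * L x 0 + c 1 * L x 1 = 0 := by
    rw [← Fin.sum_univ_two (fun i => c i * L x i), ← dotProduct, ← LinearMap.toMatrix'_mulVec,
      Matrix.dotProduct_mulVec, hcL, zero_dotProduct]
  have hc₀ : c 0 = 0 := by simpa [hv₁, hv₀] using hann v
  have hc₁ : c 1 = 0 := by simpa [hc₀, hw₁] using hann w
  exact hc (funext (Fin.forall_fin_two.2 ⟨hc₀, hc₁⟩))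

theorem det_fderiv_edgeForm_ne_zero (hk : 0 < k) (hα : 0 < k * p' + m * q') {z : Cn 2}
    (hz : ∀ i, z i ≠ 0) (hQ : edgeForm k m p' q' Q z ≠ 0) (hroot : P.IsRoot (z 1 ^ k / z 0 ^ m))
    (hsimple : P.derivative.eval (z 1 ^ k / z 0 ^ m) ≠ 0) :
    (fderiv ℂ (fun z => ![edgeForm k m p' q' Q z, edgeForm k m p q P z]) z).det ≠ 0 := by
  have hfderiv : HasFDerivAt (fun z => ![edgeForm k m p' q' Q z, edgeForm k m p q P z])
      (.pi ![fderiv ℂ (edgeForm k m p' q' Q) z, fderiv ℂ (edgeForm k m p q P) z]) z :=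
    hasFDerivAt_pi.2 <| Fin.forall_fin_two.2 ⟨(differentiableAt_edgeForm (hz 0)).hasFDerivAt,
      (differentiableAt_edgeForm (hz 0)).hasFDerivAt⟩
  rw [hfderiv.fderiv]
  refine det_ne_zero_of_apply_ne_zero (v := ![k * z 0, m * z 1]) (w := Pi.single 1 1) ?_ ?_ ?_
  · refine (fderiv_edgeForm_weightedVector (hz 0)).trans_ne (mul_ne_zero ?_ hQ)
    exact_mod_cast hα.ne'
  · refine (fderiv_edgeForm_weightedVector (hz 0)).trans ?_
    rw [edgeForm, hroot.eq_zero, mul_zero, mul_zero]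
  · refine (fderiv_edgeForm_single_one (hz 0) hroot).trans_ne ?_
    have := hz 0
    have := hz 1
    have : (k : ℂ) ≠ 0 := Nat.cast_ne_zero.2 hk.ne'
    positivity

theorem exists_finset_pow_eq {N : ℕ} (hN : 0 < N) {η : ℂ} (hη : η ≠ 0) :
    ∃ T : Finset ℂ, T.card = N ∧ ∀ x ∈ T, x ^ N = η := by
  have hprim := Complex.isPrimitiveRoot_exp N hN.ne'
  refine ⟨⟨nthRoots N η, hprim.nthRoots_nodup hη⟩, ?_, fun x => (mem_nthRoots hN).1⟩
  rw [Finset.card_mk, hprim.card_nthRoots, if_pos (IsAlgClosed.exists_pow_nat_eq η hN)]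

theorem card_le_mul_card_image_monomial_curve (hk : 0 < k) (m : ℕ) {S : Finset ((_ : ℂ) × ℂ)}
    (hS : ∀ s ∈ S, s.2 ≠ 0) :
    S.card ≤ k * (S.image fun s => (![s.2 ^ k, s.1 * s.2 ^ m] : Cn 2)).card := by
  refine Finset.card_le_mul_card_image S k fun z _ => ?_
  refine (Finset.card_le_card_of_injOn Sigma.snd (t := (nthRoots k (z 0)).toFinset) ?_ ?_).trans
    ((Multiset.toFinset_card_le _).trans (card_nthRoots k _))
  · intro s hs
    have hsz : ![s.2 ^ k, s.1 * s.2 ^ m] = z := (Finset.mem_filter.1 hs).2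
    simpa [mem_nthRoots hk] using congrFun hsz 0
  · rintro ⟨ζ, u⟩ hs ⟨ζ', u'⟩ hs' (rfl : u = u')
    obtain ⟨hs, hz⟩ := Finset.mem_filter.1 hs
    have hζ : ζ * u ^ m = ζ' * u ^ m := congrFun (hz.trans (Finset.mem_filter.1 hs').2.symm) 1
    rw [mul_right_cancel₀ (pow_ne_zero m (hS _ hs)) hζ]

/-- The points `(u ^ k, ζ * u ^ m)` with `ζ ^ k = c` and `u ^ (k * p + m * q) = η / ζ ^ q` are
solutions, and each solution is attained at most `k` times. -/
theorem exists_finset_torus_solutions (hk : 0 < k) (hpq : 0 < k * p + m * q) {c η : ℂ} (hc : c ≠ 0)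
    (hη : η ≠ 0) : ∃ S : Finset (Cn 2), k * p + m * q ≤ S.card ∧ ∀ z ∈ S,
      (∀ i, z i ≠ 0) ∧ z 0 ^ p * z 1 ^ q = η ∧ z 1 ^ k = c * z 0 ^ m := by
  set N := k * p + m * q with hN
  obtain ⟨T, hT, hTc⟩ := exists_finset_pow_eq hk hc
  have hT0 : ∀ ζ ∈ T, ζ ≠ 0 := fun ζ hζ h => hc (by rw [← hTc ζ hζ, h, zero_pow hk.ne'])
  have hroots : ∀ ζ ∈ T, ∃ U : Finset ℂ, U.card = N ∧ ∀ u ∈ U, u ^ N = η / ζ ^ q := fun ζ hζ =>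
    exists_finset_pow_eq hpq (div_ne_zero hη (pow_ne_zero q (hT0 ζ hζ)))
  choose! U hUN hU using hroots
  have hU0 : ∀ ζ ∈ T, ∀ u ∈ U ζ, u ≠ 0 := fun ζ hζ u hu h =>
    div_ne_zero hη (pow_ne_zero q (hT0 ζ hζ)) (by rw [← hU ζ hζ u hu, h, zero_pow hpq.ne'])
  refine ⟨(T.sigma U).image fun s => ![s.2 ^ k, s.1 * s.2 ^ m], ?_, ?_⟩
  · have hcard := card_le_mul_card_image_monomial_curve hk m (S := T.sigma U) fun s hs =>
      hU0 s.1 (Finset.mem_sigma.1 hs).1 s.2 (Finset.mem_sigma.1 hs).2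
    rw [Finset.card_sigma, Finset.sum_congr rfl hUN, Finset.sum_const, hT, smul_eq_mul] at hcard
    exact Nat.le_of_mul_le_mul_left hcard hk
  · rw [Finset.forall_mem_image]
    rintro ⟨ζ, u⟩ hs
    obtain ⟨hζ, hu⟩ := Finset.mem_sigma.1 hs
    have hζ0 := hT0 ζ hζ
    have hu0 := hU0 ζ hζ u hu
    refine ⟨Fin.forall_fin_two.2 ⟨pow_ne_zero k hu0, mul_ne_zero hζ0 (pow_ne_zero m hu0)⟩, ?_, ?_⟩
    · calc (u ^ k) ^ p * (ζ * u ^ m) ^ q = u ^ N * ζ ^ q := by rw [hN]; ring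
        _ = η := by rw [hU ζ hζ u hu, div_mul_cancel₀ _ (pow_ne_zero q hζ0)]
    · calc (ζ * u ^ m) ^ k = ζ ^ k * (u ^ k) ^ m := by ring
        _ = c * (u ^ k) ^ m := by rw [hTc ζ hζ]

theorem exists_finset_hasBranch_of_edge {f : Cn 2 → Cn 2} (hf : AnalyticAt ℂ f 0) (hk : 0 < k)
    (hm : 0 < m) (hα : 0 < k * p' + m * q')
    (hQ : HasEdgePolynomial k m p' q' (fun x => f x 0) Q)
    (hP : HasEdgePolynomial k m p q (fun x => f x 1) P) {c : ℂ} (hc : c ≠ 0) (hQc : Q.eval c ≠ 0)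
    (hroot : P.IsRoot c) (hsimple : P.derivative.eval c ≠ 0) :
    ∃ Λ : Finset ((Fin 2 → ℝ) × Cn 2), k * p' + m * q' ≤ Λ.card ∧
      ∀ l ∈ Λ, HasBranch f (Pi.single 0 1) l ∧ l.1 1 * k = l.1 0 * m ∧
        l.2 1 ^ k = c * l.2 0 ^ m := by
  obtain ⟨S, hScard, hS⟩ := exists_finset_torus_solutions hk hα hc (inv_ne_zero hQc) (m := m)
  set s : Fin 2 → ℝ := fun i => (![k, m] i : ℕ) / (k * p' + m * q' : ℕ)
  refine ⟨S.map ⟨fun z => (s, z), Prod.mk_right_injective s⟩, by rwa [Finset.card_map], ?_⟩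
  rw [Finset.forall_mem_map]
  intro z hz
  obtain ⟨hz0, hη, hcz⟩ := hS z hz
  have hquot : z 1 ^ k / z 0 ^ m = c := by rw [hcz, mul_div_cancel_right₀ _ (pow_ne_zero m (hz0 0))]
  have hQz : edgeForm k m p' q' Q z = 1 := by rw [edgeForm, hquot, hη, inv_mul_cancel₀ hQc]
  have hPz : edgeForm k m p q P z = 0 := by rw [edgeForm, hquot, hroot.eq_zero, mul_zero]
  refine ⟨hasBranch_of_hasInitialForm (i₀ := 0) (α := ![k * p' + m * q', k * p + m * q])
    (G := fun z => ![edgeForm k m p' q' Q z, edgeForm k m p q P z])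
    (Fin.forall_fin_two.2 ⟨hk, hm⟩) hα hf (Fin.forall_fin_two.2 ⟨hQ, hP⟩) hz0 ?_
    (det_fderiv_edgeForm_ne_zero hk hα hz0 (hQz.trans_ne one_ne_zero) (hquot ▸ hroot)
      (hquot ▸ hsimple)), ?_, hcz⟩
  · exact funext (Fin.forall_fin_two.2 ⟨hQz, hPz⟩)
  · change (m / _ : ℝ) * k = k / _ * m
    ring

end NewtonEdges

section NormalForm

variable {E n₁ n₂ : ℕ} {e c : Fin 4 → Cn 2 → ℂ}

/-- The normal form of the theorem, with the coefficients of the four monomials of the first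
component collected in `e` and those of the second one in `c`, in the order displayed there. -/
def normalForm (d n₁ n₂ : ℕ) (e c : Fin 4 → Cn 2 → ℂ) (x : Cn 2) : Cn 2 :=
  ![∑ j, x 0 ^ (![d * n₁ + 1, n₁ + 1, 1, 0] j) * x 1 ^ (![0, n₂, d * n₂, 2 * d * n₂ + 1] j) * e j x,
    ∑ j, x 0 ^ (![d * n₁, n₁, 0, 2 * d * n₁ + 1] j) * x 1 ^ (![1, n₂ + 1, d * n₂ + 1, 0] j) * c j x]

theorem hasEdgePolynomial_sum_monomial_mul {ι : Type*} [Fintype ι] {k m p q : ℕ} (hk : 0 < k)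
    (hm : 0 < m) {a b : ι → ℕ} {e : ι → Cn 2 → ℂ} (he : ∀ j, AnalyticAt ℂ (e j) 0) {t : Finset ι}
    (i : ι → ℕ) {P : ℂ[X]} (hP : ∑ j ∈ t, C (e j 0) * X ^ i j = P)
    (hon : ∀ j ∈ t, a j + m * i j = p ∧ b j = q + k * i j)
    (habove : ∀ j ∉ t, k * p + m * q < k * a j + m * b j) :
    HasEdgePolynomial k m p q (fun x => ∑ j, x 0 ^ a j * x 1 ^ b j * e j x) P := by
  have hterm (j : ι) : HasEdgePolynomial k m p q (fun x => x 0 ^ a j * x 1 ^ b j * e j x)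
      (if j ∈ t then C (e j 0) * X ^ i j else 0) := by
    split_ifs with hj
    · exact hasEdgePolynomial_monomial_mul hk hm (he j) (hon j hj).1 (hon j hj).2
    · exact hasEdgePolynomial_zero_of_lt hk hm (he j) (habove j hj)
  rw [← hP, ← Finset.univ_inter t, ← Finset.sum_ite_mem]
  exact HasEdgePolynomial.sum fun j _ => hterm j

theorem exists_finset_hasBranch_of_linear_edge {f : Cn 2 → Cn 2} {k m p q p' q' : ℕ}
    {a b a' b' : ℂ} (hf : AnalyticAt ℂ f 0) (hk : 0 < k) (hm : 0 < m) (hα : 0 < k * p' + m * q')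
    (hQ : HasEdgePolynomial k m p' q' (fun x => f x 0) (C a' + C b' * X))
    (hP : HasEdgePolynomial k m p q (fun x => f x 1) (C a + C b * X)) (ha : a ≠ 0) (hb : b ≠ 0)
    (hres : a' * b - b' * a ≠ 0) :
    ∃ Λ : Finset ((Fin 2 → ℝ) × Cn 2), k * p' + m * q' ≤ Λ.card ∧
      ∀ l ∈ Λ, HasBranch f (Pi.single 0 1) l ∧ l.1 1 * k = l.1 0 * m := by
  have hQc : (C a' + C b' * X).eval (-a / b) ≠ 0 := by
    have : (C a' + C b' * X).eval (-a / b) = (a' * b - b' * a) / b := by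
      simp only [eval_add, eval_mul, eval_C, eval_X]
      field_simp
      ring
    rw [this]
    exact div_ne_zero hres hb
  obtain ⟨Λ, hcard, hΛ⟩ := exists_finset_hasBranch_of_edge hf hk hm hα hQ hP
    (div_ne_zero (neg_ne_zero.2 ha) hb) hQc (by simp [mul_div_cancel₀, hb]) (by simpa using hb)
  exact ⟨Λ, hcard, fun l hl => ⟨(hΛ l hl).1, (hΛ l hl).2.1⟩⟩

theorem analyticAt_normalForm {d : ℕ} {z : Cn 2} (he : ∀ j, AnalyticAt ℂ (e j) z)
    (hc : ∀ j, AnalyticAt ℂ (c j) z) : AnalyticAt ℂ (normalForm d n₁ n₂ e c) z := by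
  have hcoord (i : Fin 2) : AnalyticAt ℂ (fun x : Cn 2 => x i) z :=
    (ContinuousLinearMap.proj (R := ℂ) (φ := fun _ : Fin 2 => ℂ) i).analyticAt z
  have hsum {a b : Fin 4 → ℕ} {u : Fin 4 → Cn 2 → ℂ} (hu : ∀ j, AnalyticAt ℂ (u j) z) :
      AnalyticAt ℂ (fun x => ∑ j, x 0 ^ a j * x 1 ^ b j * u j x) z :=
    Finset.analyticAt_fun_sum _ fun j _ => (((hcoord 0).pow _).mul ((hcoord 1).pow _)).mul (hu j)
  exact analyticAt_pi_iff.2 (Fin.forall_fin_two.2 ⟨hsum he, hsum hc⟩)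

theorem exists_finset_hasBranch_steep_edge (hE : 0 < E) (hn₁ : 0 < n₁) (hn₂ : 0 < n₂)
    (he : ∀ j, AnalyticAt ℂ (e j) 0) (hc : ∀ j, AnalyticAt ℂ (c j) 0) (he₀ : e 0 0 ≠ 0)
    (hc₀ : c 0 0 ≠ 0) (hc₃ : c 3 0 ≠ 0) :
    ∃ Λ : Finset ((Fin 2 → ℝ) × Cn 2), (E + 1) * n₁ + 1 ≤ Λ.card ∧ ∀ l ∈ Λ,
      HasBranch (normalForm (E + 1) n₁ n₂ e c) (Pi.single 0 1) l ∧
        l.1 1 = l.1 0 * ((E + 1) * n₁ + 1 : ℕ) := by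
  set m := (E + 1) * n₁ + 1 with hm
  have hm0 : 0 < m := Nat.succ_pos _
  have := Nat.mul_pos hn₁ hn₂
  have := Nat.mul_pos hE hn₂
  have := Nat.mul_pos hE (Nat.mul_pos hn₁ hn₂)
  have hQ : HasEdgePolynomial 1 m m 0 (fun x => normalForm (E + 1) n₁ n₂ e c x 0)
      (C (e 0 0) + C 0 * X) := by
    refine hasEdgePolynomial_sum_monomial_mul one_pos hm0 he (t := {0}) 0 (by simp)
      (by simp [hm]) ?_
    intro j hj
    fin_cases j <;> first | exact absurd (by decide) hj | (dsimp; nlinarith)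
  have hP : HasEdgePolynomial 1 m (2 * (E + 1) * n₁ + 1) 0
      (fun x => normalForm (E + 1) n₁ n₂ e c x 1) (C (c 3 0) + C (c 0 0) * X) := by
    refine hasEdgePolynomial_sum_monomial_mul one_pos hm0 hc (t := {0, 3}) ![1, 0, 0, 0]
      (by simp [add_comm]) (by simp [hm]; ring) ?_
    intro j hj
    fin_cases j <;> first | exact absurd (by decide) hj | (dsimp; nlinarith)
  obtain ⟨Λ, hcard, hΛ⟩ := exists_finset_hasBranch_of_linear_edge (analyticAt_normalForm he hc)
    one_pos hm0 (by omega) hQ hP hc₃ hc₀ (by simp [he₀, hc₀])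
  refine ⟨Λ, by omega, fun l hl => ⟨(hΛ l hl).1, by simpa using (hΛ l hl).2⟩⟩

theorem exists_finset_hasBranch_upper_middle_edge (hE : 1 < E) (hn₁ : 0 < n₁) (hn₂ : 0 < n₂)
    (he : ∀ j, AnalyticAt ℂ (e j) 0) (hc : ∀ j, AnalyticAt ℂ (c j) 0) (hc₀ : c 0 0 ≠ 0)
    (hc₁ : c 1 0 ≠ 0) (hres : e 0 0 * c 1 0 - e 1 0 * c 0 0 ≠ 0) :
    ∃ Λ : Finset ((Fin 2 → ℝ) × Cn 2), n₂ * ((E + 1) * n₁ + 1) ≤ Λ.card ∧ ∀ l ∈ Λ,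
      HasBranch (normalForm (E + 1) n₁ n₂ e c) (Pi.single 0 1) l ∧
        l.1 1 * n₂ = l.1 0 * (E * n₁ : ℕ) := by
  have hm : 0 < E * n₁ := by positivity
  have := Nat.mul_pos hn₁ hn₂
  have := Nat.mul_le_mul_right (n₁ * n₂) hE
  have hQ : HasEdgePolynomial n₂ (E * n₁) ((E + 1) * n₁ + 1) 0
      (fun x => normalForm (E + 1) n₁ n₂ e c x 0) (C (e 0 0) + C (e 1 0) * X) := by
    refine hasEdgePolynomial_sum_monomial_mul hn₂ hm he (t := {0, 1}) ![0, 1, 0, 0]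
      (by simp) (by simp; ring) ?_
    intro j hj
    fin_cases j <;> first | exact absurd (by decide) hj | (dsimp; nlinarith)
  have hP : HasEdgePolynomial n₂ (E * n₁) ((E + 1) * n₁) 1
      (fun x => normalForm (E + 1) n₁ n₂ e c x 1) (C (c 0 0) + C (c 1 0) * X) := by
    refine hasEdgePolynomial_sum_monomial_mul hn₂ hm hc (t := {0, 1}) ![0, 1, 0, 0]
      (by simp) (by simp; constructor <;> ring) ?_
    intro j hj
    fin_cases j <;> first | exact absurd (by decide) hj | (dsimp; nlinarith)
  obtain ⟨Λ, hcard, hΛ⟩ := exists_finset_hasBranch_of_linear_edge (analyticAt_normalForm he hc)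
    hn₂ hm (by positivity) hQ hP hc₀ hc₁ hres
  exact ⟨Λ, le_of_add_le_left hcard, hΛ⟩

theorem exists_finset_hasBranch_lower_middle_edge (hE : 1 < E) (hn₁ : 0 < n₁) (hn₂ : 0 < n₂)
    (he : ∀ j, AnalyticAt ℂ (e j) 0) (hc : ∀ j, AnalyticAt ℂ (c j) 0) (hc₁ : c 1 0 ≠ 0)
    (hc₂ : c 2 0 ≠ 0) (hres : e 1 0 * c 2 0 - e 2 0 * c 1 0 ≠ 0) :
    ∃ Λ : Finset ((Fin 2 → ℝ) × Cn 2), E * n₂ * (n₁ + 1) + n₁ * n₂ ≤ Λ.card ∧ ∀ l ∈ Λ,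
      HasBranch (normalForm (E + 1) n₁ n₂ e c) (Pi.single 0 1) l ∧
        l.1 1 * (E * n₂ : ℕ) = l.1 0 * n₁ := by
  have hk : 0 < E * n₂ := by positivity
  have := Nat.mul_pos hn₁ hn₂
  have := Nat.mul_le_mul_right (n₁ * n₂) hE
  have hQ : HasEdgePolynomial (E * n₂) n₁ (n₁ + 1) n₂
      (fun x => normalForm (E + 1) n₁ n₂ e c x 0) (C (e 1 0) + C (e 2 0) * X) := by
    refine hasEdgePolynomial_sum_monomial_mul hk hn₁ he (t := {1, 2}) ![0, 0, 1, 0]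
      (by simp) (by simp; constructor <;> ring) ?_
    intro j hj
    fin_cases j <;> first | exact absurd (by decide) hj | (dsimp; nlinarith)
  have hP : HasEdgePolynomial (E * n₂) n₁ n₁ (n₂ + 1)
      (fun x => normalForm (E + 1) n₁ n₂ e c x 1) (C (c 1 0) + C (c 2 0) * X) := by
    refine hasEdgePolynomial_sum_monomial_mul hk hn₁ hc (t := {1, 2}) ![0, 0, 1, 0]
      (by simp) (by simp; ring) ?_
    intro j hj
    fin_cases j <;> first | exact absurd (by decide) hj | (dsimp; nlinarith)
  exact exists_finset_hasBranch_of_linear_edge (analyticAt_normalForm he hc)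
    hk hn₁ (by positivity) hQ hP hc₁ hc₂ hres

theorem quadratic_ne_zero_of_resultant_ne_zero {K : Type*} [Field K] {a b c a' b' c' t : K}
    (ht : t ≠ 0) (hres : (c' * a - a' * c) ^ 2 - (c' * b - b' * c) * (b' * a - a' * b) ≠ 0)
    (hroot : a * t ^ 2 + b * t + c = 0) : a' * t ^ 2 + b' * t + c' ≠ 0 := by
  intro hzero
  have hlead : (b' * a - a' * b) * t + (c' * a - a' * c) = 0 := by
    linear_combination a * hzero - a' * hroot
  have hconst : (c' * a - a' * c) * t + (c' * b - b' * c) = 0 :=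
    mul_left_cancel₀ ht (by linear_combination c' * hroot - c * hzero)
  exact hres (by linear_combination (c' * a - a' * c) * hlead - (b' * a - a' * b) * hconst)

theorem exists_two_simple_roots {K : Type*} [Field K] [IsAlgClosed K] [NeZero (2 : K)] {a b c : K}
    (ha : a ≠ 0) (hdisc : discrim a b c ≠ 0) : ∃ r s : K, r ≠ s ∧ ∀ t, t = r ∨ t = s →
      a * t ^ 2 + b * t + c = 0 ∧ a * (2 * t) + b ≠ 0 := by
  obtain ⟨δ, hδ⟩ := IsAlgClosed.exists_eq_mul_self (discrim a b c)
  have hδ0 : δ ≠ 0 := left_ne_zero_of_mul (hδ ▸ hdisc)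
  have h2 : (2 : K) ≠ 0 := two_ne_zero
  have h2a : 2 * a ≠ 0 := mul_ne_zero h2 ha
  refine ⟨(-b + δ) / (2 * a), (-b - δ) / (2 * a), fun h => ?_, fun t ht => ⟨?_, fun h => ?_⟩⟩
  · rw [div_left_inj' h2a] at h
    exact mul_ne_zero h2 hδ0 (by linear_combination h)
  · rw [sq]
    exact (quadratic_eq_zero_iff ha hδ t).2 ht
  · rcases ht with rfl | rfl <;> rw [← mul_assoc, mul_comm a, mul_div_cancel₀ _ h2a] at h <;>
      exact hδ0 (by first | linear_combination h | linear_combination -h)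

theorem exists_finset_hasBranch_double_edge (hn₁ : 0 < n₁) (hn₂ : 0 < n₂)
    (he : ∀ j, AnalyticAt ℂ (e j) 0) (hc : ∀ j, AnalyticAt ℂ (c j) 0) (hc₀ : c 0 0 ≠ 0)
    (hc₂ : c 2 0 ≠ 0) (hdisc : discrim (c 2 0) (c 1 0) (c 0 0) ≠ 0)
    (hres : (e 0 0 * c 2 0 - e 2 0 * c 0 0) ^ 2 -
      (e 0 0 * c 1 0 - e 1 0 * c 0 0) * (e 1 0 * c 2 0 - e 2 0 * c 1 0) ≠ 0) :
    ∃ Λ : Finset ((Fin 2 → ℝ) × Cn 2), 2 * (n₂ * (2 * n₁ + 1)) ≤ Λ.card ∧ ∀ l ∈ Λ,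
      HasBranch (normalForm 2 n₁ n₂ e c) (Pi.single 0 1) l ∧ l.1 1 * n₂ = l.1 0 * n₁ := by
  have := Nat.mul_pos hn₁ hn₂
  have hQ : HasEdgePolynomial n₂ n₁ (2 * n₁ + 1) 0 (fun x => normalForm 2 n₁ n₂ e c x 0)
      (C (e 2 0) * X ^ 2 + C (e 1 0) * X + C (e 0 0)) := by
    refine hasEdgePolynomial_sum_monomial_mul hn₂ hn₁ he (t := {0, 1, 2}) ![0, 1, 2, 0]
      (by simp; ring) (by simp; ring_nf; simp) ?_
    intro j hj
    fin_cases j <;> first | exact absurd (by decide) hj | (dsimp; nlinarith)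
  have hP : HasEdgePolynomial n₂ n₁ (2 * n₁) 1 (fun x => normalForm 2 n₁ n₂ e c x 1)
      (C (c 2 0) * X ^ 2 + C (c 1 0) * X + C (c 0 0)) := by
    refine hasEdgePolynomial_sum_monomial_mul hn₂ hn₁ hc (t := {0, 1, 2}) ![0, 1, 2, 0]
      (by simp; ring) (by simp; ring_nf; simp) ?_
    intro j hj
    fin_cases j <;> first | exact absurd (by decide) hj | (dsimp; nlinarith)
  obtain ⟨r, s, hrs, hroots⟩ := exists_two_simple_roots hc₂ hdisc
  have hbranch (t : ℂ) (ht : t = r ∨ t = s) : ∃ Λ : Finset ((Fin 2 → ℝ) × Cn 2),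
      n₂ * (2 * n₁ + 1) ≤ Λ.card ∧ ∀ l ∈ Λ, HasBranch (normalForm 2 n₁ n₂ e c) (Pi.single 0 1) l ∧
        l.1 1 * n₂ = l.1 0 * n₁ ∧ l.2 1 ^ n₂ = t * l.2 0 ^ n₁ := by
    obtain ⟨hroot, hsimple⟩ := hroots t ht
    have ht0 : t ≠ 0 := by
      rintro rfl
      exact hc₀ (by simpa using hroot)
    refine exists_finset_hasBranch_of_edge (analyticAt_normalForm he hc) hn₂ hn₁ (by positivity)
      hQ hP ht0 ?_ (by simpa using hroot) (by simpa [one_add_one_eq_two] using hsimple)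
    simpa using quadratic_ne_zero_of_resultant_ne_zero ht0 hres hroot
  obtain ⟨Λ, hcard, hΛ⟩ := hbranch r (Or.inl rfl)
  obtain ⟨Λ', hcard', hΛ'⟩ := hbranch s (Or.inr rfl)
  have hdisj : Disjoint Λ Λ' := Finset.disjoint_left.2 fun l hl hl' =>
    hrs (mul_right_cancel₀ (pow_ne_zero n₁ ((hΛ l hl).1.1 0).2)
      ((hΛ l hl).2.2.symm.trans (hΛ' l hl').2.2))
  refine ⟨Λ ∪ Λ', by rw [Finset.card_union_of_disjoint hdisj]; omega, fun l hl => ?_⟩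
  rcases Finset.mem_union.1 hl with hl | hl
  exacts [⟨(hΛ l hl).1, (hΛ l hl).2.1⟩, ⟨(hΛ' l hl).1, (hΛ' l hl).2.1⟩]

/-- The product of the quantities that must not vanish for the edge polynomials of `normalForm` to
have only simple nonzero roots, none of them shared by the two components: coefficients, a
discriminant, and resultants. -/
def genericityProduct (e c : Fin 4 → ℂ) : ℂ :=
  e 0 * (c 0 * c 1 * c 2 * c 3) * discrim (c 2) (c 1) (c 0) *
    ((e 0 * c 1 - e 1 * c 0) * (e 1 * c 2 - e 2 * c 1)) *
    ((e 0 * c 2 - e 2 * c 0) ^ 2 - (e 0 * c 1 - e 1 * c 0) * (e 1 * c 2 - e 2 * c 1))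

theorem exists_finset_hasBranch_middle_edges (hE : 0 < E) (hn₁ : 0 < n₁) (hn₂ : 0 < n₂)
    (he : ∀ j, AnalyticAt ℂ (e j) 0) (hc : ∀ j, AnalyticAt ℂ (c j) 0)
    (hgen : genericityProduct (fun j => e j 0) (fun j => c j 0) ≠ 0) :
    ∃ Λ : Finset ((Fin 2 → ℝ) × Cn 2), 2 * (E + 1) * n₁ * n₂ + (E + 1) * n₂ ≤ Λ.card ∧ ∀ l ∈ Λ,
      HasBranch (normalForm (E + 1) n₁ n₂ e c) (Pi.single 0 1) l ∧
        l.1 1 * n₂ ≤ l.1 0 * (E * n₁ : ℕ) := by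
  simp only [genericityProduct, mul_ne_zero_iff] at hgen
  obtain ⟨⟨⟨⟨-, ⟨⟨hc₀, hc₁⟩, hc₂⟩, -⟩, hdisc⟩, hres₁, hres₂⟩, hres⟩ := hgen
  obtain rfl | hE := (Nat.succ_le_of_lt hE).eq_or_lt
  · obtain ⟨Λ, hcard, hΛ⟩ := exists_finset_hasBranch_double_edge hn₁ hn₂ he hc hc₀ hc₂ hdisc hres
    refine ⟨Λ, le_of_eq_of_le (by ring) hcard, fun l hl => ⟨(hΛ l hl).1, ?_⟩⟩
    simpa using (hΛ l hl).2.le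
  obtain ⟨Λ, hcard, hΛ⟩ :=
    exists_finset_hasBranch_upper_middle_edge hE hn₁ hn₂ he hc hc₀ hc₁ hres₁
  obtain ⟨Λ', hcard', hΛ'⟩ :=
    exists_finset_hasBranch_lower_middle_edge hE hn₁ hn₂ he hc hc₁ hc₂ hres₂
  have hslope (l) (hl : l ∈ Λ') : l.1 1 * n₂ < l.1 0 * (E * n₁ : ℕ) := by
    have hpos := (hΛ' l hl).1.1
    calc l.1 1 * n₂ < l.1 1 * (E * n₂ : ℕ) :=
          mul_lt_mul_of_pos_left (Nat.cast_lt.2 (lt_mul_left hn₂ hE)) (hpos 1).1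
      _ = l.1 0 * n₁ := (hΛ' l hl).2
      _ ≤ l.1 0 * (E * n₁ : ℕ) := mul_le_mul_of_nonneg_left
          (Nat.cast_le.2 (Nat.le_mul_of_pos_left n₁ (zero_lt_one.trans hE))) (hpos 0).1.le
  have hdisj : Disjoint Λ Λ' := Finset.disjoint_left.2 fun l hl hl' =>
    (hslope l hl').ne (hΛ l hl).2
  refine ⟨Λ ∪ Λ', ?_, fun l hl => ?_⟩
  · rw [Finset.card_union_of_disjoint hdisj]
    calc 2 * (E + 1) * n₁ * n₂ + (E + 1) * n₂ =
          n₂ * ((E + 1) * n₁ + 1) + (E * n₂ * (n₁ + 1) + n₁ * n₂) := by ring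
      _ ≤ Λ.card + Λ'.card := add_le_add hcard hcard'
  · rcases Finset.mem_union.1 hl with hl | hl
    exacts [⟨(hΛ l hl).1, (hΛ l hl).2.le⟩, ⟨(hΛ' l hl).1, (hslope l hl).le⟩]

theorem exists_finset_hasBranch_normalForm {d : ℕ} (hd : 1 < d) (hn₁ : 0 < n₁) (hn₂ : 0 < n₂)
    (he : ∀ j, AnalyticAt ℂ (e j) 0) (hc : ∀ j, AnalyticAt ℂ (c j) 0)
    (hgen : genericityProduct (fun j => e j 0) (fun j => c j 0) ≠ 0) :
    ∃ Λ : Finset ((Fin 2 → ℝ) × Cn 2), 2 * d * n₁ * n₂ + d * n₁ + d * n₂ + 1 ≤ Λ.card ∧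
      ∀ l ∈ Λ, HasBranch (normalForm d n₁ n₂ e c) (Pi.single 0 1) l := by
  obtain ⟨E, rfl⟩ : ∃ E, d = E + 1 := ⟨d - 1, by omega⟩
  have hE : 0 < E := by omega
  obtain ⟨Λ, hcard, hΛ⟩ := exists_finset_hasBranch_middle_edges hE hn₁ hn₂ he hc hgen
  simp only [genericityProduct, mul_ne_zero_iff] at hgen
  obtain ⟨⟨⟨⟨he₀, ⟨⟨hc₀, -⟩, -⟩, hc₃⟩, -⟩, -⟩, -⟩ := hgen
  obtain ⟨Λ', hcard', hΛ'⟩ := exists_finset_hasBranch_steep_edge hE hn₁ hn₂ he hc he₀ hc₀ hc₃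
  have hslope (l) (hl : l ∈ Λ') : l.1 0 * (E * n₁ : ℕ) < l.1 1 * n₂ := by
    have hl0 := ((hΛ' l hl).1.1 0).1
    rw [(hΛ' l hl).2, mul_assoc, ← Nat.cast_mul]
    refine mul_lt_mul_of_pos_left (Nat.cast_lt.2 ?_) hl0
    nlinarith [Nat.mul_pos hE hn₁]
  have hdisj : Disjoint Λ Λ' := Finset.disjoint_left.2 fun l hl hl' =>
    (hslope l hl').not_ge (hΛ l hl).2
  refine ⟨Λ ∪ Λ', ?_, fun l hl => ?_⟩
  · rw [Finset.card_union_of_disjoint hdisj]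
    linarith
  · rcases Finset.mem_union.1 hl with hl | hl
    exacts [(hΛ l hl).1, (hΛ' l hl).1]

end NormalForm

section GenericCoefficients

theorem exists_frequently_genericityProduct_ne_zero (e c : Fin 4 → ℂ) : ∃ e' c' : Fin 4 → ℂ,
    ∃ᶠ t : ℂ in 𝓝 0, genericityProduct (e + t • e') (c + t • c') ≠ 0 := by
  refine ⟨![1, 0, 1, 0] - e, ![1, 1, 1, 1] - c, fun hzero => ?_⟩
  set φ : ℂ → ℂ := fun t =>
    genericityProduct (e + t • (![1, 0, 1, 0] - e)) (c + t • (![1, 1, 1, 1] - c)) with hφ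
  have hdiff : Differentiable ℂ φ := by
    simp only [hφ, genericityProduct, discrim, Pi.add_apply, Pi.smul_apply, smul_eq_mul]
    fun_prop
  have hφ0 : φ =ᶠ[𝓝 0] 0 := hzero.mono fun t => not_not.1
  have hφ_zero : φ = 0 := (hdiff.differentiableOn.analyticOnNhd isOpen_univ).eq_of_eventuallyEq
    analyticOnNhd_const hφ0
  have hone : genericityProduct ![1, 0, 1, 0] ![1, 1, 1, 1] = 0 := by
    simpa only [hφ, one_smul, add_sub_cancel, Pi.zero_apply] using congrFun hφ_zero 1
  simp only [genericityProduct, discrim, Matrix.cons_val] at hone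
  norm_num at hone

variable {d n₁ n₂ : ℕ} {e c : Fin 4 → Cn 2 → ℂ}

theorem normalForm_add_smul_const (t : ℂ) (e' c' : Fin 4 → ℂ) (x : Cn 2) :
    normalForm d n₁ n₂ (fun j x => e j x + t * e' j) (fun j x => c j x + t * c' j) x =
      normalForm d n₁ n₂ e c x + t • normalForm d n₁ n₂ (fun j _ => e' j) (fun j _ => c' j) x := by
  ext i
  fin_cases i <;> simp [normalForm, Fin.sum_univ_four] <;> ring

theorem exists_generic_normalForm_norm_sub_lt {r ε : ℝ} (hε : 0 < ε)
    (he : ∀ j, AnalyticOnNhd ℂ (e j) (closedBall 0 r))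
    (hc : ∀ j, AnalyticOnNhd ℂ (c j) (closedBall 0 r)) :
    ∃ e' c' : Fin 4 → Cn 2 → ℂ, (∀ j, AnalyticOnNhd ℂ (e' j) (closedBall 0 r)) ∧
      (∀ j, AnalyticOnNhd ℂ (c' j) (closedBall 0 r)) ∧
      (∀ x ∈ closedBall 0 r, ‖normalForm d n₁ n₂ e' c' x - normalForm d n₁ n₂ e c x‖ < ε) ∧
      genericityProduct (fun j => e' j 0) (fun j => c' j 0) ≠ 0 := by
  obtain ⟨e', c', hgen⟩ :=
    exists_frequently_genericityProduct_ne_zero (fun j => e j 0) (fun j => c j 0)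
  set h : Cn 2 → Cn 2 := normalForm d n₁ n₂ (fun j _ => e' j) (fun j _ => c' j)
  have hh : Continuous h := continuous_iff_continuousAt.2 fun x =>
    (analyticAt_normalForm (fun _ => analyticAt_const) fun _ => analyticAt_const).continuousAt
  obtain ⟨M, hM⟩ := (isCompact_closedBall (0 : Cn 2) r).exists_bound_of_continuousOn hh.continuousOn
  have hsmall : ∀ᶠ t : ℂ in 𝓝 0, ‖t‖ * M < ε := by
    have hcont : Continuous fun t : ℂ => ‖t‖ * M := by fun_prop
    exact (hcont.tendsto' 0 0 (by simp)).eventually_lt_const hε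
  obtain ⟨t, hgen, ht⟩ := (hgen.and_eventually hsmall).exists
  refine ⟨fun j x => e j x + t * e' j, fun j x => c j x + t * c' j,
    fun j => (he j).add analyticOnNhd_const, fun j => (hc j).add analyticOnNhd_const,
    fun x hx => ?_, hgen⟩
  calc _ = ‖t‖ * ‖h x‖ := by rw [normalForm_add_smul_const, add_sub_cancel_left, norm_smul]
    _ ≤ ‖t‖ * M := mul_le_mul_of_nonneg_left (hM x hx) (norm_nonneg t)
    _ < ε := ht

end GenericCoefficients

theorem zeroOrder_lemma_dd4_general (d n₁ n₂ : ℕ) (hd : 1 < d) (hn₁ : 0 < n₁) (hn₂ : 0 < n₂)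
    (f : Cn 2 → Cn 2) (a₁₁ a₁₂ a₂₁ a₂₂ v₁ v₂ w₁ w₂ : Cn 2 → ℂ)
    (ha₁₁ : AnalyticAt ℂ a₁₁ 0) (ha₁₂ : AnalyticAt ℂ a₁₂ 0)
    (ha₂₁ : AnalyticAt ℂ a₂₁ 0) (ha₂₂ : AnalyticAt ℂ a₂₂ 0)
    (hv₁ : AnalyticAt ℂ v₁ 0) (hv₂ : AnalyticAt ℂ v₂ 0)
    (hw₁ : AnalyticAt ℂ w₁ 0) (hw₂ : AnalyticAt ℂ w₂ 0)
    (hform : ∀ᶠ x in 𝓝 (0 : Cn 2),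
      f x = ![x 0 ^ (d * n₁ + 1) * a₁₁ x + x 0 ^ (n₁ + 1) * x 1 ^ n₂ * v₁ x +
                x 0 * x 1 ^ (d * n₂) * w₁ x + x 1 ^ (2 * d * n₂ + 1) * a₁₂ x,
              x 0 ^ (d * n₁) * x 1 * v₂ x + x 0 ^ n₁ * x 1 ^ (n₂ + 1) * w₂ x +
                x 1 ^ (d * n₂ + 1) * a₂₂ x + x 0 ^ (2 * d * n₁ + 1) * a₂₁ x])
    (hiso : IsolatedZeroAt0 f) :
    2 * d * n₁ * n₂ + d * n₁ + d * n₂ + 1 ≤ zeroOrder f 0 := by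
  have he : ∀ j, AnalyticAt ℂ (![a₁₁, v₁, w₁, a₁₂] j) 0 := by simp [Fin.forall_fin_succ, *]
  have hc : ∀ j, AnalyticAt ℂ (![v₂, w₂, a₂₂, a₂₁] j) 0 := by simp [Fin.forall_fin_succ, *]
  have hf : f =ᶠ[𝓝 0] normalForm d n₁ n₂ ![a₁₁, v₁, w₁, a₁₂] ![v₂, w₂, a₂₂, a₂₁] :=
    hform.mono fun x hx => by simp [hx, normalForm, Fin.sum_univ_four]
  refine le_zeroOrder_of_hasBranch ((analyticAt_normalForm he hc).congr hf.symm) hiso ?_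
  have hgood := hf.and ((eventually_all.2 fun j => (he j).eventually_analyticAt).and
    (eventually_all.2 fun j => (hc j).eventually_analyticAt))
  have hball := (eventually_closedBall_subset hgood).filter_mono (nhdsWithin_le_nhds (s := Ioi 0))
  refine (hball.and self_mem_nhdsWithin).frequently.mono fun r ⟨hr, hr0⟩ ε hε => ?_
  obtain ⟨e', c', he', hc', hclose, hgen⟩ := exists_generic_normalForm_norm_sub_lt
    (d := d) (n₁ := n₁) (n₂ := n₂) hε (fun j x hx => (hr hx).2.1 j) (fun j x hx => (hr hx).2.2 j)
  have h0 : (0 : Cn 2) ∈ closedBall 0 r := mem_closedBall_self (le_of_lt hr0)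
  obtain ⟨Λ, hcard, hΛ⟩ := exists_finset_hasBranch_normalForm hd hn₁ hn₂
    (fun j => he' j 0 h0) (fun j => hc' j 0 h0) hgen
  exact ⟨_, fun x hx => analyticAt_normalForm (fun j => he' j x hx) fun j => hc' j x hx,
    fun x hx => by rw [(hr hx).1]; exact hclose x hx, _, Λ, hcard, hΛ⟩

/-- Cronin-type estimate for the normal form appearing in case (b4): if `0` is an
isolated zero of `f` of the displayed shape, then
`π_f(0) ≥ 2 d n₁ n₂ + d n₁ + d n₂ + 1`. -/
theorem zeroOrder_lemma_dd4 (d n₁ n₂ : ℕ) (hd : 1 < d) (hn₁ : 1 < n₁) (hn₂ : 1 < n₂)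
    (f : Cn 2 → Cn 2) (a₁₁ a₁₂ a₂₁ a₂₂ v₁ v₂ w₁ w₂ : Cn 2 → ℂ)
    (ha₁₁ : AnalyticAt ℂ a₁₁ 0) (ha₁₂ : AnalyticAt ℂ a₁₂ 0)
    (ha₂₁ : AnalyticAt ℂ a₂₁ 0) (ha₂₂ : AnalyticAt ℂ a₂₂ 0)
    (hv₁ : AnalyticAt ℂ v₁ 0) (hv₂ : AnalyticAt ℂ v₂ 0)
    (hw₁ : AnalyticAt ℂ w₁ 0) (hw₂ : AnalyticAt ℂ w₂ 0)
    (hform : ∀ᶠ x in 𝓝 (0 : Cn 2),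
      f x = ![x 0 ^ (d * n₁ + 1) * a₁₁ x + x 0 ^ (n₁ + 1) * x 1 ^ n₂ * v₁ x +
                x 0 * x 1 ^ (d * n₂) * w₁ x + x 1 ^ (2 * d * n₂ + 1) * a₁₂ x,
              x 0 ^ (d * n₁) * x 1 * v₂ x + x 0 ^ n₁ * x 1 ^ (n₂ + 1) * w₂ x +
                x 1 ^ (d * n₂ + 1) * a₂₂ x + x 0 ^ (2 * d * n₁ + 1) * a₂₁ x])
    (hiso : IsolatedZeroAt0 f) :
    2 * d * n₁ * n₂ + d * n₁ + d * n₂ + 1 ≤ zeroOrder f 0 := by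
  exact zeroOrder_lemma_dd4_general d n₁ n₂ hd (zero_lt_one.trans hn₁) (zero_lt_one.trans hn₂) f
    a₁₁ a₁₂ a₂₁ a₂₂ v₁ v₂ w₁ w₂ ha₁₁ ha₁₂ ha₂₁ ha₂₂ hv₁ hv₂ hw₁ hw₂ hform hiso

end ZhangPaper
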